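/- arXiv:0801.0233 — 3 statements merged into one kernel-verified Lean document; each statement's English description precedes it below -/
import Mathlib

section
/- Let r ≥ 1 and let λ̄ = (λ^{(1)},…,λ^{(r)}) be a sequence of partitions in P_n. For each i ∈ {1,…,n−1} there exists an involution s_i : B_λ̄ → B_λ̄ (the Bender–Knuth-type involution on barred skew tableaux) such that for every T ∈ B_λ̄: (i) c_{s_iT}(y) = c_T(y), and (ii) ω(s_iT) = σ_i·ω(T), where σ_i ∈ S_n is the simple transposition exchanging i and i+1 acting on ℕ^n by permuting coordinates. -/
open Finset MvPolynomial

attribute [local instance] Classical.propDecidable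

/-- A partition in `P_n`: a weakly decreasing sequence of naturals. -/
def IsPartition {n : ℕ} (lam : Fin n → ℕ) : Prop := Antitone lam

/-- The cells of the Young diagram of `lam`, as pairs (row, column), 0-based. -/
noncomputable def cells {n : ℕ} (lam : Fin n → ℕ) : Finset (Fin n × ℕ) :=
  (Finset.univ ×ˢ Finset.range (Finset.univ.sup lam)).filter fun c => c.2 < lam c.1

/-- Semistandardness for a filling with values in `Fin n` (0-based values):
rows weakly increase, columns strictly increase. -/
def IsSSYT {n : ℕ} (lam : Fin n → ℕ) (T : cells lam → Fin n) : Prop :=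
  (∀ c d : cells lam, (c : Fin n × ℕ).1 = (d : Fin n × ℕ).1 →
      (c : Fin n × ℕ).2 ≤ (d : Fin n × ℕ).2 → T c ≤ T d) ∧
  (∀ c d : cells lam, (c : Fin n × ℕ).2 = (d : Fin n × ℕ).2 →
      (c : Fin n × ℕ).1 < (d : Fin n × ℕ).1 → T c < T d)

/-- The y-subscript `a + c(a) - r(a)` of a cell (1-based value and coordinates). -/
def ysub {n : ℕ} (a : Fin n) (c : Fin n × ℕ) : ℤ := (a : ℤ) + 1 + (c.2 : ℤ) - ((c.1 : ℕ) : ℤ)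

/-- The Schur polynomial `s_lam(x)`, in the ring with `x`-variables `Sum.inl i`
and `y`-variables `Sum.inr (i, k)` (family `i`, subscript `k`). -/
noncomputable def schur (n r : ℕ) (lam : Fin n → ℕ) :
    MvPolynomial (Fin n ⊕ Fin r × ℤ) ℤ :=
  ∑ T ∈ Finset.univ.filter (IsSSYT lam), ∏ c : cells lam, X (Sum.inl (T c))

/-- The factorial Schur polynomial `s_lam(x | y^{(i)})`. -/
noncomputable def factSchur (n r : ℕ) (i : Fin r) (lam : Fin n → ℕ) :
    MvPolynomial (Fin n ⊕ Fin r × ℤ) ℤ :=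
  ∑ T ∈ Finset.univ.filter (IsSSYT lam),
    ∏ c : cells lam,
      (X (Sum.inl (T c)) + X (Sum.inr (i, ysub (T c) (c : Fin n × ℕ))))

/-- A barred filling of a single Young diagram: an entry is a value in `Fin n`
(0-based) together with a `Bool` recording whether it is barred.  Rows weakly
increase and columns strictly increase in value, disregarding bars. -/
def IsBarred {n : ℕ} (lam : Fin n → ℕ) (T : cells lam → Fin n × Bool) : Prop :=
  (∀ c d : cells lam, (c : Fin n × ℕ).1 = (d : Fin n × ℕ).1 →
      (c : Fin n × ℕ).2 ≤ (d : Fin n × ℕ).2 → (T c).1 ≤ (T d).1) ∧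
  (∀ c d : cells lam, (c : Fin n × ℕ).2 = (d : Fin n × ℕ).2 →
      (c : Fin n × ℕ).1 < (d : Fin n × ℕ).1 → (T c).1 < (T d).1)

/-- A barred skew tableau of shape `λ̄ = (lam 0, …, lam (r-1))`: since consecutive
diagrams are placed strictly below and to the left of the preceding one, no two
diagrams share a row or a column, so such a tableau is exactly a tuple of barred
fillings of the individual diagrams. -/
def IsBarredSkew {n r : ℕ} (lam : Fin r → Fin n → ℕ)
    (T : (i : Fin r) → cells (lam i) → Fin n × Bool) : Prop :=
  ∀ i, IsBarred (lam i) (T i)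

/-- Unbarred content of a barred filling of one diagram. -/
noncomputable def content1 {n : ℕ} (lam : Fin n → ℕ) (T : cells lam → Fin n × Bool)
    (k : Fin n) : ℕ :=
  (Finset.univ.filter fun c : cells lam => T c = (k, false)).card

/-- Unbarred content `ω(T)` of a barred skew tableau. -/
noncomputable def contentT {n r : ℕ} (lam : Fin r → Fin n → ℕ)
    (T : (i : Fin r) → cells (lam i) → Fin n × Bool) (k : Fin n) : ℕ :=
  ∑ i, content1 (lam i) (T i) k

/-- The monomial `c_T(y)` contributed by the barred entries of one diagram
(living in the ring of `y`-variables only). -/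
noncomputable def cT1 {n : ℕ} (r : ℕ) (i : Fin r) (lam : Fin n → ℕ)
    (T : cells lam → Fin n × Bool) : MvPolynomial (Fin r × ℤ) ℤ :=
  ∏ c ∈ Finset.univ.filter (fun c : cells lam => (T c).2 = true),
    X (i, ysub (T c).1 (c : Fin n × ℕ))

/-- The monomial `c_T(y)` of a barred skew tableau. -/
noncomputable def cT {n r : ℕ} (lam : Fin r → Fin n → ℕ)
    (T : (i : Fin r) → cells (lam i) → Fin n × Bool) : MvPolynomial (Fin r × ℤ) ℤ :=
  ∏ i, cT1 r i (lam i) (T i)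

/-- The unbarred column word of a barred filling of one diagram: unbarred values
(0-based) read down each column, from the rightmost column to the leftmost. -/
noncomputable def colWord1 {n : ℕ} (lam : Fin n → ℕ)
    (T : cells lam → Fin n × Bool) : List ℕ :=
  ((List.range (Finset.univ.sup lam)).reverse).flatMap fun j =>
    (List.finRange n).filterMap fun i =>
      if h : (i, j) ∈ cells lam then
        (if (T ⟨(i, j), h⟩).2 = false then some ((T ⟨(i, j), h⟩).1 : ℕ) else none)
      else none

/-- The unbarred column word of a barred skew tableau: diagram `lam 0` is the
rightmost, so its word comes first. -/
noncomputable def colWord {n r : ℕ} (lam : Fin r → Fin n → ℕ)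
    (T : (i : Fin r) → cells (lam i) → Fin n × Bool) : List ℕ :=
  (List.finRange r).flatMap fun i => colWord1 (lam i) (T i)

/-- A word (with 0-based values) is Yamanouchi if every initial segment contains
at least as many `k`'s as `(k+1)`'s, for every `k`. -/
def IsYam (w : List ℕ) : Prop :=
  ∀ t k, ((w.take t).count (k + 1)) ≤ (w.take t).count k

/-- The alternant `a_ξ(x) = det[(x_i)^{ξ_j}]`. -/
noncomputable def avand (n r : ℕ) (xi : Fin n → ℕ) :
    MvPolynomial (Fin n ⊕ Fin r × ℤ) ℤ :=
  Matrix.det (Matrix.of fun i j : Fin n =>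
    (X (Sum.inl i) : MvPolynomial (Fin n ⊕ Fin r × ℤ) ℤ) ^ xi j)

/-- `ρ = (n-1, n-2, …, 0)`. -/
def rhoPart (n : ℕ) : Fin n → ℕ := fun i => n - 1 - (i : ℕ)


def BKpsi {M : Type} (x0 x1 : M) (y : ℕ → M) (j : ℕ) (e : Bool × Bool) : M :=
  if e.2 = true then (if e.1 = true then y (j + 1) else y j)
  else (if e.1 = true then x1 else x0)

def BKMono (R : Finset ℕ) (w : ℕ → Bool × Bool) : Prop :=
  ∀ a ∈ R, ∀ b ∈ R, a ≤ b → (w a).1 = true → (w b).1 = true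

noncomputable def BKW (S : Finset ℕ) (d j : ℕ) : Bool × Bool :=
  if j < d then (false, decide (j ∈ S)) else (true, decide (j + 1 ∈ S))

theorem bk_reflect (C : Finset ℕ) : ∃ ρ : ℕ → ℕ, ∀ d ∈ C, ρ d ∈ C ∧ ρ (ρ d) = d ∧
    (C.filter (fun p => p < ρ d)).card = (C.filter (fun p => d < p)).card ∧
    (C.filter (fun p => ρ d < p)).card = (C.filter (fun p => p < d)).card := by
  let e := C.orderIsoOfFin rfl
  let s : C → C := fun d => e (Fin.rev (e.symm d))
  have hs : ∀ d, s (s d) = d := by intro d; simp [s]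
  have hlt : ∀ p d : C, p < s d ↔ d < s p := by
    intro p d
    simp only [s]
    rw [← e.symm.lt_iff_lt, ← e.symm.lt_iff_lt (x := d)]
    simp only [OrderIso.symm_apply_apply]
    rw [Fin.lt_def, Fin.lt_def, Fin.val_rev, Fin.val_rev]
    omega
  let ρ : ℕ → ℕ := fun d => if h : d ∈ C then (s ⟨d, h⟩ : ℕ) else d
  have hρ : ∀ d (h : d ∈ C), ρ d = s ⟨d, h⟩ := fun d h => by simp [ρ, h]
  have hmem : ∀ d ∈ C, ρ d ∈ C := fun d h => by rw [hρ d h]; exact (s ⟨d, h⟩).2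
  have hinv : ∀ d ∈ C, ρ (ρ d) = d := fun d h => by
    rw [hρ (ρ d) (hmem d h)]
    have : (⟨ρ d, hmem d h⟩ : C) = s ⟨d, h⟩ := Subtype.ext (hρ d h)
    rw [this, hs]
  have hl : ∀ p ∈ C, ∀ d ∈ C, p < ρ d ↔ d < ρ p := fun p hp d hd => by
    rw [hρ d hd, hρ p hp]; exact hlt ⟨p, hp⟩ ⟨d, hd⟩
  refine ⟨ρ, fun d hd => ⟨hmem d hd, hinv d hd, ?_, ?_⟩⟩
  · apply Finset.card_bij' (fun p _ => ρ p) (fun p _ => ρ p)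
    · intro p hp; simp only [mem_filter] at hp ⊢
      exact ⟨hmem _ hp.1, (hl _ hp.1 _ hd).1 hp.2⟩
    · intro p hp; simp only [mem_filter] at hp ⊢
      exact ⟨hmem _ hp.1, (hl _ (hmem _ hp.1) _ hd).2 (by rw [hinv _ hp.1]; exact hp.2)⟩
    · intro p hp; exact hinv _ (mem_filter.1 hp).1
    · intro p hp; exact hinv _ (mem_filter.1 hp).1
  · apply Finset.card_bij' (fun p _ => ρ p) (fun p _ => ρ p)
    · intro p hp; simp only [mem_filter] at hp ⊢
      refine ⟨hmem _ hp.1, ?_⟩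
      have := (hl _ (hmem _ hd) _ (hmem _ hp.1)).1 (by rw [hinv _ hp.1]; exact hp.2)
      rwa [hinv _ hd] at this
    · intro p hp; simp only [mem_filter] at hp ⊢
      refine ⟨hmem _ hp.1, (hl _ (hmem _ hd) _ hp.1).2 ?_⟩
      rw [hinv _ hd]; exact hp.2
    · intro p hp; exact hinv _ (mem_filter.1 hp).1
    · intro p hp; exact hinv _ (mem_filter.1 hp).1

theorem bk_prod {M : Type} [CommMonoid M] (x0 x1 : M) (y : ℕ → M) (a b d : ℕ) (S : Finset ℕ)
    (hS : S ⊆ Icc a b) (hd : d ∈ Icc a b) (hdS : d ∉ S) :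
    ∏ j ∈ Ico a b, BKpsi x0 x1 y j (BKW S d j) =
      (∏ p ∈ S, y p) * x0 ^ ((Icc a b \ S).filter (fun p => p < d)).card
        * x1 ^ ((Icc a b \ S).filter (fun p => d < p)).card := by
  rw [mem_Icc] at hd
  have h1 : ∏ j ∈ Ico a b, BKpsi x0 x1 y j (BKW S d j) =
      ∏ p ∈ (Icc a b).erase d, (if p ∈ S then y p else if p < d then x0 else x1) := by
    apply Finset.prod_bij' (fun j _ => if j < d then j else j + 1)
      (fun p _ => if p < d then p else p - 1)
    · intro j hj; simp only [mem_Ico, mem_erase, mem_Icc] at *; split_ifs <;> omega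
    · intro j hj; simp only [mem_Ico, mem_erase, mem_Icc] at *; split_ifs <;> omega
    · intro j hj; simp only [mem_Ico] at *; split_ifs <;> omega
    · intro j hj; simp only [mem_erase, mem_Icc] at *; split_ifs <;> omega
    · intro j hj
      by_cases h : j < d
      · simp [BKpsi, BKW, h]
      · have : ¬ (j + 1 < d) := by omega
        simp [BKpsi, BKW, h, this]
  have h2 : (Icc a b).erase d = S ∪ (((Icc a b \ S).filter (fun p => p < d)) ∪
      ((Icc a b \ S).filter (fun p => d < p))) := by
    ext p
    simp only [mem_erase, mem_union, mem_filter, mem_sdiff]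
    constructor
    · rintro ⟨h, h'⟩
      by_cases hp : p ∈ S
      · exact Or.inl hp
      · rcases lt_or_gt_of_ne h with h | h
        · exact Or.inr (Or.inl ⟨⟨h', hp⟩, h⟩)
        · exact Or.inr (Or.inr ⟨⟨h', hp⟩, h⟩)
    · rintro (h | ⟨h, h'⟩ | ⟨h, h'⟩)
      · exact ⟨fun e => hdS (e ▸ h), hS h⟩
      · exact ⟨by omega, h.1⟩
      · exact ⟨by omega, h.1⟩
  rw [h1, h2, Finset.prod_union, Finset.prod_union, ← mul_assoc]
  · congr 1
    · congr 1
      · apply Finset.prod_congr rfl; intro p hp; simp [hp]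
      · apply Finset.prod_eq_pow_card; intro p hp
        simp only [mem_filter, mem_sdiff] at hp; simp [hp.1.2, hp.2]
    · apply Finset.prod_eq_pow_card; intro p hp
      simp only [mem_filter, mem_sdiff] at hp
      have : ¬ (p < d) := by omega
      simp [hp.1.2, this]
  · rw [Finset.disjoint_left]; intro p hp hp'; have h1 := (mem_filter.1 hp).2; have h2 := (mem_filter.1 hp').2; omega
  · rw [Finset.disjoint_left]; intro p hp; simp only [mem_union, mem_filter, mem_sdiff]; tauto

noncomputable def BKd (a b : ℕ) (w : ℕ → Bool × Bool) : ℕ :=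
  a + ((Ico a b).filter (fun j => (w j).1 = false)).card

noncomputable def BKS (a b : ℕ) (w : ℕ → Bool × Bool) : Finset ℕ :=
  (Icc a b).filter (fun p => (p < BKd a b w ∧ (w p).2 = true) ∨
    (BKd a b w < p ∧ (w (p - 1)).2 = true))

theorem bk_dec (a b d : ℕ) (S : Finset ℕ) (w : ℕ → Bool × Bool)
    (hS : S ⊆ Icc a b) (hd : d ∈ Icc a b) (hdS : d ∉ S)
    (hw : ∀ j ∈ Ico a b, w j = BKW S d j) : BKd a b w = d ∧ BKS a b w = S := by
  rw [mem_Icc] at hd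
  have h1 : BKd a b w = d := by
    unfold BKd
    have : (Ico a b).filter (fun j => (w j).1 = false) = Ico a d := by
      ext j
      simp only [mem_filter, mem_Ico]
      constructor
      · rintro ⟨h, h'⟩
        rw [hw j (mem_Ico.2 h)] at h'
        by_contra hc
        have : ¬ j < d := by omega
        simp [BKW, this] at h'
      · intro h
        have hj : j ∈ Ico a b := by rw [mem_Ico]; omega
        refine ⟨mem_Ico.1 hj, ?_⟩
        rw [hw j hj]; simp [BKW, h.2]
    rw [this, Nat.card_Ico]; omega
  refine ⟨h1, ?_⟩
  ext p
  simp only [BKS, h1, mem_filter]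
  constructor
  · rintro ⟨hp, ⟨h, h'⟩ | ⟨h, h'⟩⟩
    · rw [mem_Icc] at hp
      rw [hw p (by rw [mem_Ico]; omega)] at h'
      simpa [BKW, h] using h'
    · rw [mem_Icc] at hp
      rw [hw (p-1) (by rw [mem_Ico]; omega)] at h'
      have h2 : ¬ (p - 1 < d) := by omega
      have h3 : p - 1 + 1 = p := by omega
      simpa [BKW, h2, h3] using h'
  · intro hp
    have hp' := hS hp
    refine ⟨hp', ?_⟩
    rw [mem_Icc] at hp'
    have hne : p ≠ d := fun e => hdS (e ▸ hp)
    rcases lt_or_gt_of_ne hne with h | h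
    · left
      rw [hw p (by rw [mem_Ico]; omega)]
      simp [BKW, h, hp]
    · right
      rw [hw (p-1) (by rw [mem_Ico]; omega)]
      have h2 : ¬ (p - 1 < d) := by omega
      have h3 : p - 1 + 1 = p := by omega
      simp [BKW, h2, h3, hp, h]

theorem bk_enc (a b : ℕ) (hab : a ≤ b) (w : ℕ → Bool × Bool) (hw : BKMono (Ico a b) w) :
    BKS a b w ⊆ Icc a b ∧ BKd a b w ∈ Icc a b ∧ BKd a b w ∉ BKS a b w ∧
    ∀ j ∈ Ico a b, w j = BKW (BKS a b w) (BKd a b w) j := by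
  have hle : ((Ico a b).filter (fun j => (w j).1 = false)).card ≤ b - a := by
    calc _ ≤ (Ico a b).card := Finset.card_filter_le _ _
      _ = _ := Nat.card_Ico _ _
  have hdm : a ≤ BKd a b w ∧ BKd a b w ≤ b := by unfold BKd; omega
  have key : ∀ j ∈ Ico a b, ((w j).1 = false ↔ j < BKd a b w) := by
    intro j hj
    have hj' := mem_Ico.1 hj
    constructor
    · intro h
      have : Ico a (j+1) ⊆ (Ico a b).filter (fun j => (w j).1 = false) := by
        intro k hk
        rw [mem_Ico] at hk
        have hk' : k ∈ Ico a b := by rw [mem_Ico]; omega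
        refine mem_filter.2 ⟨hk', ?_⟩
        by_contra hc
        have := hw k hk' j hj (by omega) (by simpa using hc)
        simp [this] at h
      have := Finset.card_le_card this
      rw [Nat.card_Ico] at this
      unfold BKd; omega
    · intro h
      by_contra hc
      have : (Ico a b).filter (fun j => (w j).1 = false) ⊆ Ico a j := by
        intro k hk
        rw [mem_filter] at hk
        have hk' := mem_Ico.1 hk.1
        rw [mem_Ico]
        refine ⟨hk'.1, ?_⟩
        by_contra hkj
        have := hw j hj k hk.1 (by omega) (by simpa using hc)
        simp [this] at hk
      have := Finset.card_le_card this
      rw [Nat.card_Ico] at this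
      unfold BKd at h; omega
  refine ⟨Finset.filter_subset _ _, mem_Icc.2 hdm, ?_, ?_⟩
  · simp [BKS]
  · intro j hj
    have hj' := mem_Ico.1 hj
    by_cases h : j < BKd a b w
    · have h1 := (key j hj).2 h
      have h2 : j ∈ BKS a b w ↔ (w j).2 = true := by
        simp only [BKS, mem_filter, mem_Icc]
        constructor
        · rintro ⟨_, h' | h'⟩
          · exact h'.2
          · omega
        · intro h'; exact ⟨by omega, Or.inl ⟨h, h'⟩⟩
      apply Prod.ext
      · simp [BKW, h, h1]
      · simp [BKW, h, h2]
    · have h1 : (w j).1 = true := by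
        have := mt (key j hj).1 h
        simpa using this
      have h2 : j + 1 ∈ BKS a b w ↔ (w j).2 = true := by
        simp only [BKS, mem_filter, mem_Icc, Nat.add_sub_cancel]
        constructor
        · rintro ⟨_, h' | h'⟩
          · omega
          · exact h'.2
        · intro h'; exact ⟨by omega, Or.inr ⟨by omega, h'⟩⟩
      apply Prod.ext
      · simp [BKW, h, h1]
      · simp [BKW, h, h2]

theorem bk_row (R : Finset ℕ) : ∃ g : (ℕ → Bool × Bool) → ℕ → Bool × Bool,
    (∀ a ∈ R, ∀ b ∈ R, ∀ c, a ≤ c → c ≤ b → c ∈ R) → ∀ w, BKMono R w →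
      BKMono R (g w) ∧
      (∀ w', (∀ j ∈ R, w' j = g w j) → ∀ j ∈ R, g w' j = w j) ∧
      ∀ (M : Type) [CommMonoid M] (x0 x1 : M) (y : ℕ → M),
        ∏ j ∈ R, BKpsi x0 x1 y j (g w j) = ∏ j ∈ R, BKpsi x1 x0 y j (w j) := by
  by_cases hR : (∀ a ∈ R, ∀ b ∈ R, ∀ c, a ≤ c → c ≤ b → c ∈ R)
  swap
  · exact ⟨id, fun h => absurd h hR⟩
  obtain ⟨a, b, hab, rfl⟩ : ∃ a b, a ≤ b ∧ R = Ico a b := by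
    rcases R.eq_empty_or_nonempty with rfl | hne
    · exact ⟨0, 0, le_rfl, by simp⟩
    · refine ⟨R.min' hne, R.max' hne + 1, ?_, ?_⟩
      · exact (R.min'_le _ (R.max'_mem hne)).trans (Nat.le_succ _)
      · ext c
        rw [mem_Ico]
        constructor
        · intro h; exact ⟨R.min'_le _ h, Nat.lt_succ_of_le (R.le_max' _ h)⟩
        · intro h
          exact hR _ (R.min'_mem hne) _ (R.max'_mem hne) c h.1 (Nat.le_of_lt_succ h.2)
  choose ρ hρ using bk_reflect
  refine ⟨fun w => BKW (BKS a b w) (ρ (Icc a b \ BKS a b w) (BKd a b w)), fun _ w hw => ?_⟩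
  obtain ⟨h1, h2, h3, h4⟩ := bk_enc a b hab w hw
  obtain ⟨k1, k2, k3, k4⟩ := hρ (Icc a b \ BKS a b w) (BKd a b w) (mem_sdiff.2 ⟨h2, h3⟩)
  rw [mem_sdiff] at k1
  refine ⟨?_, ?_, ?_⟩
  · intro p _ q _ hpq h
    by_cases hp : p < ρ (Icc a b \ BKS a b w) (BKd a b w)
    · simp [BKW, hp] at h
    · have hq : ¬ q < ρ (Icc a b \ BKS a b w) (BKd a b w) := by omega
      simp [BKW, hq]
  · intro w' hw' j hj
    obtain ⟨e1, e2⟩ := bk_dec a b _ _ w' h1 k1.1 k1.2 hw'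
    simp only [e1, e2, k2]
    exact (h4 j hj).symm
  · intro M _ x0 x1 y
    rw [bk_prod x0 x1 y a b _ _ h1 k1.1 k1.2, Finset.prod_congr rfl
      (fun j hj => by rw [h4 j hj] :
        ∀ j ∈ Ico a b, BKpsi x1 x0 y j (w j) = BKpsi x1 x0 y j (BKW (BKS a b w) (BKd a b w) j)),
      bk_prod x1 x0 y a b _ _ h1 h2 h3, k3, k4, mul_assoc, mul_assoc, mul_comm (x0 ^ _)]

section BK

set_option linter.unusedSectionVars false

variable {C : Type} [Fintype C] {n : ℕ}

structure BKShape (row col : C → ℕ) : Prop where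
  inj : ∀ c d, row c = row d → col c = col d → c = d
  closed : ∀ c r j, r ≤ row c → j ≤ col c → ∃ d, row d = r ∧ col d = j

structure BKok (row col : C → ℕ) (T : C → Fin n × Bool) : Prop where
  hrow : ∀ c d, row c = row d → col c ≤ col d → (T c).1 ≤ (T d).1
  hcol : ∀ c d, col c = col d → row c < row d → (T c).1 < (T d).1

def BKin (lo hi : Fin n) (T : C → Fin n × Bool) (c : C) : Prop := (T c).1 = lo ∨ (T c).1 = hi

def BKlk (col : C → ℕ) (lo hi : Fin n) (T : C → Fin n × Bool) (c : C) : Prop :=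
  ∃ d, col d = col c ∧ (T d).1 = Equiv.swap lo hi (T c).1

noncomputable def BKR (row col : C → ℕ) (lo hi : Fin n) (T : C → Fin n × Bool) (r : ℕ) :
    Finset ℕ :=
  (univ.filter (fun c => row c = r ∧ BKin lo hi T c ∧ ¬ BKlk col lo hi T c)).image col

noncomputable def BKw (row col : C → ℕ) (hi : Fin n) (T : C → Fin n × Bool) (r j : ℕ) :
    Bool × Bool :=
  (decide (∃ c, row c = r ∧ col c = j ∧ (T c).1 = hi),
    decide (∃ c, row c = r ∧ col c = j ∧ (T c).2 = true))

noncomputable def BKg : Finset ℕ → (ℕ → Bool × Bool) → ℕ → Bool × Bool :=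
  fun R => Classical.choose (bk_row R)

noncomputable def BKf (row col : C → ℕ) (lo hi : Fin n) (T : C → Fin n × Bool) (c : C) :
    Fin n × Bool :=
  if BKin lo hi T c then
    if BKlk col lo hi T c then
      ((T c).1, decide (∃ d, col d = col c ∧ T d = (Equiv.swap lo hi (T c).1, true)))
    else
      (if (BKg (BKR row col lo hi T (row c)) (BKw row col hi T (row c)) (col c)).1 = true
        then hi else lo,
        (BKg (BKR row col lo hi T (row c)) (BKw row col hi T (row c)) (col c)).2)
  else T c

variable {row col : C → ℕ} {lo hi : Fin n} {T : C → Fin n × Bool}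

theorem bk_w_eq (hs : BKShape row col) (c : C) :
    BKw row col hi T (row c) (col c) = (decide ((T c).1 = hi), (T c).2) := by
  unfold BKw
  apply Prod.ext
  · simp only [decide_eq_decide]
    constructor
    · rintro ⟨d, h1, h2, h3⟩; rwa [hs.inj d c h1 h2] at h3
    · intro h; exact ⟨c, rfl, rfl, h⟩
  · by_cases h : (T c).2 = true
    · simp only [h, decide_eq_true_eq]; exact ⟨c, rfl, rfl, h⟩
    · have : ¬ ∃ d, row d = row c ∧ col d = col c ∧ (T d).2 = true := by
        rintro ⟨d, h1, h2, h3⟩; rw [hs.inj d c h1 h2] at h3; exact h h3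
      simp only [Bool.not_eq_true] at h
      simp only [h, decide_eq_false_iff_not]; exact this

theorem bk_mem_R (hs : BKShape row col) (c : C) :
    col c ∈ BKR row col lo hi T (row c) ↔ BKin lo hi T c ∧ ¬ BKlk col lo hi T c := by
  simp only [BKR, mem_image, mem_filter, mem_univ, true_and]
  constructor
  · rintro ⟨d, ⟨h1, h2⟩, h3⟩; rwa [hs.inj d c h1 h3] at h2
  · intro h; exact ⟨c, ⟨rfl, h⟩, rfl⟩

theorem bk_mem_R' {r j : ℕ} :
    j ∈ BKR row col lo hi T r ↔ ∃ c, row c = r ∧ col c = j ∧ BKin lo hi T c ∧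
      ¬ BKlk col lo hi T c := by
  simp only [BKR, mem_image, mem_filter, mem_univ, true_and]
  constructor
  · rintro ⟨d, ⟨h1, h2⟩, h3⟩; exact ⟨d, h1, h3, h2⟩
  · rintro ⟨d, h1, h2, h3⟩; exact ⟨d, ⟨h1, h3⟩, h2⟩

theorem bk_adj (hs : BKShape row col) (hT : BKok row col T) (hlh : hi.val = lo.val + 1)
    {c d : C} (hcd : col c = col d) (hc : (T c).1 = lo) (hd : (T d).1 = hi) :
    row d = row c + 1 := by
  rcases lt_trichotomy (row c) (row d) with h | h | h
  · by_contra hne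
    obtain ⟨e, he1, he2⟩ := hs.closed d (row c + 1) (col c) (by omega) (by omega)
    have h1 := hT.hcol c e he2.symm (by omega)
    have h2 := hT.hcol e d (by omega) (by omega)
    rw [hc] at h1; rw [hd] at h2
    rw [Fin.lt_def] at h1 h2; omega
  · have := hs.inj c d h hcd
    rw [this, hd] at hc
    rw [hc] at hlh; omega
  · have h1 := hT.hcol d c hcd.symm h
    rw [hc, hd, Fin.lt_def] at h1; omega

theorem bk_lock_high (hs : BKShape row col) (hT : BKok row col T) (hlh : hi.val = lo.val + 1)
    {c d : C} (hr : row c = row d) (hcd : col c ≤ col d) (hc : (T c).1 = hi) (hd : (T d).1 = hi)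
    (hl : BKlk col lo hi T c) : BKlk col lo hi T d := by
  obtain ⟨e, he1, he2⟩ := hl
  rw [hc, Equiv.swap_apply_right] at he2
  have h := bk_adj hs hT hlh he1 he2 hc
  obtain ⟨f, hf1, hf2⟩ := hs.closed d (row e) (col d) (by omega) le_rfl
  refine ⟨f, hf2, ?_⟩
  rw [hd, Equiv.swap_apply_right]
  have h1 := hT.hrow e f hf1.symm (by omega)
  have h2 := hT.hcol f d hf2 (by omega)
  rw [he2, Fin.le_def] at h1
  rw [hd, Fin.lt_def] at h2
  apply Fin.ext; omega

theorem bk_lock_low (hs : BKShape row col) (hT : BKok row col T) (hlh : hi.val = lo.val + 1)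
    {c d : C} (hr : row c = row d) (hcd : col c ≤ col d) (hc : (T c).1 = lo) (hd : (T d).1 = lo)
    (hl : BKlk col lo hi T d) : BKlk col lo hi T c := by
  obtain ⟨e, he1, he2⟩ := hl
  rw [hd, Equiv.swap_apply_left] at he2
  have h := bk_adj hs hT hlh he1.symm hd he2
  obtain ⟨f, hf1, hf2⟩ := hs.closed e (row e) (col c) le_rfl (by omega)
  refine ⟨f, hf2, ?_⟩
  rw [hc, Equiv.swap_apply_left]
  have h1 := hT.hrow f e hf1 (by omega)
  have h2 := hT.hcol c f hf2.symm (by omega)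
  rw [he2, Fin.le_def] at h1
  rw [hc, Fin.lt_def] at h2
  apply Fin.ext; omega

theorem bk_R_conn (hs : BKShape row col) (hT : BKok row col T) (hlh : hi.val = lo.val + 1)
    (r : ℕ) : ∀ a ∈ BKR row col lo hi T r, ∀ b ∈ BKR row col lo hi T r,
      ∀ c, a ≤ c → c ≤ b → c ∈ BKR row col lo hi T r := by
  intro a ha b hb c hac hcb
  obtain ⟨p, hp1, hp2, hp3, hp4⟩ := bk_mem_R'.1 ha
  obtain ⟨q, hq1, hq2, hq3, hq4⟩ := bk_mem_R'.1 hb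
  obtain ⟨e, he1, he2⟩ := hs.closed q r c (by omega) (by omega)
  have h1 := hT.hrow p e (by omega) (by omega)
  have h2 := hT.hrow e q (by omega) (by omega)
  rw [Fin.le_def] at h1 h2
  have hin : BKin lo hi T e := by
    unfold BKin at *
    simp only [Fin.ext_iff] at *
    omega
  refine bk_mem_R'.2 ⟨e, he1, he2, hin, fun hl => ?_⟩
  rcases hin with h | h
  · refine hp4 (bk_lock_low hs hT hlh (by omega) (by omega) ?_ h hl)
    unfold BKin at hp3
    simp only [Fin.ext_iff] at *
    omega
  · refine hq4 (bk_lock_high hs hT hlh (by omega) (by omega) h ?_ hl)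
    unfold BKin at hq3
    simp only [Fin.ext_iff] at *
    omega

theorem bk_w_mono (hs : BKShape row col) (hT : BKok row col T) (hlh : hi.val = lo.val + 1)
    (r : ℕ) : BKMono (BKR row col lo hi T r) (BKw row col hi T r) := by
  intro a ha b hb hab h
  obtain ⟨p, rfl, rfl, hp3, hp4⟩ := bk_mem_R'.1 ha
  obtain ⟨q, hq1, rfl, hq3, hq4⟩ := bk_mem_R'.1 hb
  rw [bk_w_eq hs] at h
  rw [← hq1, bk_w_eq hs]
  simp only [decide_eq_true_eq] at *
  have h1 := hT.hrow p q hq1.symm hab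
  rw [Fin.le_def] at h1
  unfold BKin at hq3
  simp only [Fin.ext_iff] at *
  omega

theorem bk_g_spec (hs : BKShape row col) (hT : BKok row col T) (hlh : hi.val = lo.val + 1)
    (r : ℕ) :
    BKMono (BKR row col lo hi T r) (BKg (BKR row col lo hi T r) (BKw row col hi T r)) ∧
      (∀ w', (∀ j ∈ BKR row col lo hi T r, w' j =
          BKg (BKR row col lo hi T r) (BKw row col hi T r) j) →
        ∀ j ∈ BKR row col lo hi T r, BKg (BKR row col lo hi T r) w' j = BKw row col hi T r j) ∧
      ∀ (M : Type) [CommMonoid M] (x0 x1 : M) (y : ℕ → M),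
        ∏ j ∈ BKR row col lo hi T r, BKpsi x0 x1 y j
          (BKg (BKR row col lo hi T r) (BKw row col hi T r) j) =
        ∏ j ∈ BKR row col lo hi T r, BKpsi x1 x0 y j (BKw row col hi T r j) :=
  Classical.choose_spec (bk_row (BKR row col lo hi T r)) (bk_R_conn hs hT hlh r) _
    (bk_w_mono hs hT hlh r)

theorem bk_f_out {c : C} (h : ¬ BKin lo hi T c) : BKf row col lo hi T c = T c := by
  simp [BKf, h]

theorem bk_f_lk {c : C} (h : BKin lo hi T c) (h' : BKlk col lo hi T c) :
    BKf row col lo hi T c =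
      ((T c).1, decide (∃ d, col d = col c ∧ T d = (Equiv.swap lo hi (T c).1, true))) := by
  simp [BKf, h, h']

theorem bk_f_free {c : C} (h : BKin lo hi T c) (h' : ¬ BKlk col lo hi T c) :
    BKf row col lo hi T c =
      (if (BKg (BKR row col lo hi T (row c)) (BKw row col hi T (row c)) (col c)).1 = true
        then hi else lo,
        (BKg (BKR row col lo hi T (row c)) (BKw row col hi T (row c)) (col c)).2) := by
  simp [BKf, h, h']

theorem bk_in_iff (c : C) : BKin lo hi (BKf row col lo hi T) c ↔ BKin lo hi T c := by
  by_cases h : BKin lo hi T c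
  · refine iff_of_true ?_ h
    by_cases h' : BKlk col lo hi T c
    · unfold BKin; rw [bk_f_lk h h']; exact h
    · unfold BKin; rw [bk_f_free h h']
      simp only
      split_ifs <;> simp
  · unfold BKin; rw [bk_f_out h]

theorem bk_lk_symm {c d : C} (hcd : col d = col c)
    (h : (T d).1 = Equiv.swap lo hi (T c).1) : BKlk col lo hi T d :=
  ⟨c, hcd.symm, by rw [h, Equiv.swap_apply_self]⟩

theorem bk_swap_in {c d : C} (hc : BKin lo hi T c) 
    (h : (T d).1 = Equiv.swap lo hi (T c).1) : BKin lo hi T d := by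
  unfold BKin at *
  rcases hc with hc | hc <;> rw [hc] at h <;> simp at h <;> simp [h]

theorem bk_lk_iff (hs : BKShape row col) (hT : BKok row col T) (hlh : hi.val = lo.val + 1)
    {c : C} (hc : BKin lo hi T c) :
    BKlk col lo hi (BKf row col lo hi T) c ↔ BKlk col lo hi T c := by
  have hne : lo ≠ hi := fun e => by rw [e] at hlh; omega
  constructor
  · intro h
    by_contra hl
    obtain ⟨d, hd1, hd2⟩ := h
    have hdi : BKin lo hi T d :=
      (bk_in_iff d).1 (bk_swap_in ((bk_in_iff (row := row) (col := col) c).2 hc) hd2)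
    have : (T d).1 = (T c).1 := by
      have h1 : (T d).1 ≠ Equiv.swap lo hi (T c).1 := fun e => hl ⟨d, hd1, e⟩
      rcases hc with hc | hc <;> rcases hdi with hd | hd <;> rw [hc, hd] at h1 ⊢ <;> simp at h1
    have hdc : d = c := by
      apply hs.inj _ _ _ hd1
      rcases lt_trichotomy (row d) (row c) with h | h | h
      · exact absurd this (hT.hcol d c hd1 h).ne
      · exact h
      · exact absurd this (hT.hcol c d hd1.symm h).ne'
    rw [hdc] at hd2
    rcases (bk_in_iff (row := row) (col := col) c).2 hc with h | h <;> rw [h] at hd2 <;>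
      simp at hd2
    · exact hne hd2
    · exact hne hd2.symm
  · intro h
    obtain ⟨d, hd1, hd2⟩ := id h
    refine ⟨d, hd1, ?_⟩
    rw [bk_f_lk hc h, bk_f_lk (bk_swap_in hc hd2) (bk_lk_symm hd1 hd2)]
    exact hd2

theorem bk_f_ok (hs : BKShape row col) (hT : BKok row col T) (hlh : hi.val = lo.val + 1) :
    BKok row col (BKf row col lo hi T) := by
  have hin : ∀ c, BKin lo hi T c → ((BKf row col lo hi T c).1 = lo ∨
      (BKf row col lo hi T c).1 = hi) := fun c hc => (bk_in_iff c).2 hc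
  constructor
  · intro c d hr hcd
    have h0 := hT.hrow c d hr hcd
    by_cases hc : BKin lo hi T c
    · by_cases hd : BKin lo hi T d
      · by_cases lc : BKlk col lo hi T c
        · by_cases ld : BKlk col lo hi T d
          · rw [bk_f_lk hc lc, bk_f_lk hd ld]; exact h0
          · rw [bk_f_lk hc lc]
            simp only
            rcases id hc with h | h
            · rw [h]; rcases hin d hd with h' | h' <;> rw [h', Fin.le_def] ; omega
            · exfalso
              refine ld (bk_lock_high hs hT hlh hr hcd h ?_ lc)
              unfold BKin at hd
              simp only [Fin.le_def, Fin.ext_iff] at *; omega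
        · by_cases ld : BKlk col lo hi T d
          · rw [bk_f_lk hd ld]
            simp only
            rcases id hd with h | h
            · exfalso
              refine lc (bk_lock_low hs hT hlh hr hcd ?_ h ld)
              unfold BKin at hc
              simp only [Fin.le_def, Fin.ext_iff] at *; omega
            · rw [h]; rcases hin c hc with h' | h' <;> rw [h', Fin.le_def] ; omega
          · rw [bk_f_free hc lc, bk_f_free hd ld]
            have hm := (bk_g_spec hs hT hlh (row c)).1 (col c) ((bk_mem_R hs c).2 ⟨hc, lc⟩)
              (col d) (by rw [hr]; exact (bk_mem_R hs d).2 ⟨hd, ld⟩) hcd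
            change (BKg (BKR row col lo hi T (row c)) (BKw row col hi T (row c)) (col c)).1 = true
              → (BKg (BKR row col lo hi T (row c)) (BKw row col hi T (row c)) (col d)).1 = true
              at hm
            rw [← hr]
            simp only
            split_ifs with h1 h2
            · exact le_rfl
            · exact absurd (hm h1) h2
            · rw [Fin.le_def]; omega
            · exact le_rfl
      · rw [bk_f_out hd]
        have := hin c hc
        unfold BKin at hc hd
        simp only [Fin.le_def, Fin.ext_iff] at *; omega
    · by_cases hd : BKin lo hi T d
      · rw [bk_f_out hc]
        have := hin d hd
        unfold BKin at hc hd
        simp only [Fin.le_def, Fin.ext_iff] at *; omega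
      · rw [bk_f_out hc, bk_f_out hd]; exact h0
  · intro c d hcd hr
    have h0 := hT.hcol c d hcd hr
    by_cases hc : BKin lo hi T c
    · by_cases hd : BKin lo hi T d
      · have h1 : (T c).1 = lo ∧ (T d).1 = hi := by
          unfold BKin at hc hd
          simp only [Fin.lt_def, Fin.ext_iff] at *; omega
        have e : (T d).1 = Equiv.swap lo hi (T c).1 := by rw [h1.1, h1.2]; simp
        rw [bk_f_lk hc ⟨d, hcd.symm, e⟩, bk_f_lk hd (bk_lk_symm hcd.symm e)]
        exact h0
      · rw [bk_f_out hd]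
        have := hin c hc
        unfold BKin at hc hd
        simp only [Fin.lt_def, Fin.ext_iff] at *; omega
    · by_cases hd : BKin lo hi T d
      · rw [bk_f_out hc]
        have := hin d hd
        unfold BKin at hc hd
        simp only [Fin.lt_def, Fin.ext_iff] at *; omega
      · rw [bk_f_out hc, bk_f_out hd]; exact h0

theorem bk_R_eq (hs : BKShape row col) (hT : BKok row col T) (hlh : hi.val = lo.val + 1)
    (r : ℕ) : BKR row col lo hi (BKf row col lo hi T) r = BKR row col lo hi T r := by
  unfold BKR
  congr 1
  apply Finset.filter_congr
  intro c _
  rw [bk_in_iff]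
  constructor
  · rintro ⟨h1, h2, h3⟩; exact ⟨h1, h2, by rwa [bk_lk_iff hs hT hlh h2] at h3⟩
  · rintro ⟨h1, h2, h3⟩; exact ⟨h1, h2, by rwa [bk_lk_iff hs hT hlh h2]⟩

theorem bk_w_f (hs : BKShape row col) (hlh : hi.val = lo.val + 1)
    (r : ℕ) : ∀ j ∈ BKR row col lo hi T r, BKw row col hi (BKf row col lo hi T) r j =
      BKg (BKR row col lo hi T r) (BKw row col hi T r) j := by
  have hne : lo ≠ hi := fun e => by rw [e] at hlh; omega
  intro j hj
  obtain ⟨c, rfl, rfl, h1, h2⟩ := bk_mem_R'.1 hj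
  rw [bk_w_eq hs, bk_f_free h1 h2]
  apply Prod.ext
  · simp only
    split_ifs with h
    · simp [h]
    · simp only [Bool.not_eq_true] at h; simp [h, hne]
  · rfl

/-- the partner lemma -/
theorem bk_partner (hs : BKShape row col) (hT : BKok row col T) {c d : C} 
    (hd1 : col d = col c) (hd2 : (T d).1 = Equiv.swap lo hi (T c).1) :
    decide (∃ d, col d = col c ∧ T d = (Equiv.swap lo hi (T c).1, true)) = (T d).2 := by
  have : (∃ d, col d = col c ∧ T d = (Equiv.swap lo hi (T c).1, true)) ↔ (T d).2 = true := by
    constructor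
    · rintro ⟨e, he1, he2⟩
      have h2 : (T e).1 = (T d).1 := by rw [he2, hd2]
      have : e = d := by
        apply hs.inj _ _ _ (he1.trans hd1.symm)
        rcases lt_trichotomy (row e) (row d) with h | h | h
        · exact absurd h2 (hT.hcol e d (he1.trans hd1.symm) h).ne
        · exact h
        · exact absurd h2 (hT.hcol d e (hd1.trans he1.symm) h).ne'
      rw [← this, he2]
    · intro h; exact ⟨d, hd1, Prod.ext hd2 h⟩
  simp only [this]; simp

theorem bk_f_lk' (hs : BKShape row col) (hT : BKok row col T) {c d : C} (hc : BKin lo hi T c)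
    (hd1 : col d = col c) (hd2 : (T d).1 = Equiv.swap lo hi (T c).1) :
    BKf row col lo hi T c = ((T c).1, (T d).2) := by
  rw [bk_f_lk hc ⟨d, hd1, hd2⟩, bk_partner hs hT hd1 hd2]

theorem bk_f_inv (hs : BKShape row col) (hT : BKok row col T) (hlh : hi.val = lo.val + 1) :
    BKf row col lo hi (BKf row col lo hi T) = T := by
  funext c
  by_cases hc : BKin lo hi T c
  · have hc' := (bk_in_iff (row := row) (col := col) c).2 hc
    by_cases lc : BKlk col lo hi T c
    · obtain ⟨d, hd1, hd2⟩ := id lc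
      have e1 := bk_f_lk' hs hT hc hd1 hd2
      have e2 := bk_f_lk' hs hT (bk_swap_in hc hd2) hd1.symm
        (by rw [hd2, Equiv.swap_apply_self])
      rw [bk_f_lk' hs (bk_f_ok hs hT hlh) hc' hd1 (by rw [e1, e2]; exact hd2), e1, e2]
    · have lc' := mt (bk_lk_iff hs hT hlh hc).1 lc
      rw [bk_f_free hc' lc', bk_R_eq hs hT hlh]
      have := (bk_g_spec hs hT hlh (row c)).2.1 _ (bk_w_f hs hlh (row c)) (col c)
        ((bk_mem_R hs c).2 ⟨hc, lc⟩)
      change BKg _ _ _ = _ at this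
      rw [this, bk_w_eq hs]
      apply Prod.ext
      · simp only [decide_eq_true_eq]
        split_ifs with h
        · exact h.symm
        · rcases hc with h' | h'
          · exact h'.symm
          · exact absurd h' h
      · rfl
  · have hc' := mt (bk_in_iff (row := row) (col := col) c).1 hc
    rw [bk_f_out hc', bk_f_out hc]

/-- the weight of an entry -/
def BKwt {M : Type} (x : Fin n → M) (y : ℤ → M) (r c : ℕ) (e : Fin n × Bool) : M :=
  if e.2 = true then y ((e.1 : ℤ) + 1 + (c : ℤ) - (r : ℤ)) else x e.1

theorem bk_f_wt (hs : BKShape row col) (hT : BKok row col T) (hlh : hi.val = lo.val + 1)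
    {M : Type} [CommMonoid M] (x : Fin n → M) (y : ℤ → M) :
    ∏ c, BKwt x y (row c) (col c) (BKf row col lo hi T c) =
      ∏ c, BKwt (x ∘ Equiv.swap lo hi) y (row c) (col c) (T c) := by
  have hne : lo ≠ hi := fun e => by rw [e] at hlh; omega
  rw [← Finset.prod_filter_mul_prod_filter_not univ (BKin lo hi T),
    ← Finset.prod_filter_mul_prod_filter_not univ (BKin lo hi T) (fun c =>
      BKwt (x ∘ Equiv.swap lo hi) y (row c) (col c) (T c))]
  congr 1
  swap
  · apply Finset.prod_congr rfl
    intro c hc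
    have hc := (mem_filter.1 hc).2
    rw [bk_f_out hc]
    unfold BKin at hc
    push Not at hc
    simp [BKwt, Equiv.swap_apply_of_ne_of_ne hc.1 hc.2]
  rw [← Finset.prod_filter_mul_prod_filter_not (univ.filter (BKin lo hi T)) (BKlk col lo hi T),
    ← Finset.prod_filter_mul_prod_filter_not (univ.filter (BKin lo hi T)) (BKlk col lo hi T)
      (fun c => BKwt (x ∘ Equiv.swap lo hi) y (row c) (col c) (T c))]
  simp only [Finset.filter_filter]
  congr 1
  · let p : C → C := fun c => if h : BKlk col lo hi T c then Classical.choose h else c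
    have hp : ∀ c, BKlk col lo hi T c → col (p c) = col c ∧
        (T (p c)).1 = Equiv.swap lo hi (T c).1 := by
      intro c h
      simp only [p, h, dif_pos]
      exact Classical.choose_spec h
    have hp1 : ∀ c, BKin lo hi T c ∧ BKlk col lo hi T c →
        BKin lo hi T (p c) ∧ BKlk col lo hi T (p c) := fun c h =>
      ⟨bk_swap_in h.1 (hp c h.2).2, bk_lk_symm (hp c h.2).1 (hp c h.2).2⟩
    have hp2 : ∀ c, BKin lo hi T c ∧ BKlk col lo hi T c → p (p c) = c := by
      intro c h
      have h1 := hp c h.2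
      have h2 := hp (p c) (hp1 c h).2
      have h3 : (T (p (p c))).1 = (T c).1 := by rw [h2.2, h1.2, Equiv.swap_apply_self]
      have h4 := h2.1.trans h1.1
      apply hs.inj _ _ _ h4
      rcases lt_trichotomy (row (p (p c))) (row c) with h | h | h
      · exact absurd h3 (hT.hcol _ _ h4 h).ne
      · exact h
      · exact absurd h3 (hT.hcol _ _ h4.symm h).ne'
    apply Finset.prod_bij' (fun c _ => p c) (fun c _ => p c)
    · intro c hc; exact mem_filter.2 ⟨mem_univ _, hp1 c (mem_filter.1 hc).2⟩
    · intro c hc; exact mem_filter.2 ⟨mem_univ _, hp1 c (mem_filter.1 hc).2⟩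
    · intro c hc; exact hp2 c (mem_filter.1 hc).2
    · intro c hc; exact hp2 c (mem_filter.1 hc).2
    · intro c hc
      have hc := (mem_filter.1 hc).2
      obtain ⟨h1, h2⟩ := hp c hc.2
      rw [bk_f_lk' hs hT hc.1 h1 h2]
      unfold BKwt
      simp only [Function.comp, h2, Equiv.swap_apply_self]
      congr 2
      rcases hc.1 with h | h
      · have := bk_adj hs hT hlh h1.symm h (by rw [h2, h]; simp)
        rw [h, Equiv.swap_apply_left, h1, this]; push_cast; rw [hlh]; push_cast; ring
      · have := bk_adj hs hT hlh h1 (by rw [h2, h]; simp) h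
        rw [h, Equiv.swap_apply_right, h1, this]; push_cast; rw [hlh]; push_cast; ring
  · have hfib : ∀ F : C → M,
        ∏ c ∈ univ.filter (fun c => BKin lo hi T c ∧ ¬ BKlk col lo hi T c), F c =
        ∏ r ∈ univ.image row, ∏ c ∈ (univ.filter (fun c => BKin lo hi T c ∧
          ¬ BKlk col lo hi T c)).filter (fun c => row c = r), F c := by
      intro F
      exact (Finset.prod_fiberwise_of_maps_to (fun c _ => mem_image_of_mem _ (mem_univ _)) _).symm
    rw [hfib, hfib]
    apply Finset.prod_congr rfl
    intro r _
    have hset : ∀ (F : C → M) (G : ℕ → M), (∀ c, BKin lo hi T c → ¬ BKlk col lo hi T c →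
        row c = r → F c = G (col c)) →
        ∏ c ∈ (univ.filter (fun c => BKin lo hi T c ∧
          ¬ BKlk col lo hi T c)).filter (fun c => row c = r), F c =
        ∏ j ∈ BKR row col lo hi T r, G j := by
      intro F G h
      unfold BKR
      rw [Finset.prod_image]
      · apply Finset.prod_congr
        · ext c; simp only [mem_filter, mem_univ, true_and]; tauto
        · intro c hc
          simp only [mem_filter, mem_univ, true_and] at hc
          exact h c hc.2.1 hc.2.2 hc.1
      · intro c hc d hd hcd
        simp only [Finset.coe_filter, Set.mem_ofPred_eq, mem_univ, true_and] at hc hd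
        exact hs.inj _ _ (hc.1.trans hd.1.symm) hcd
    have hspec := (bk_g_spec hs hT hlh r).2.2 M (x lo) (x hi)
      (fun k => y ((lo : ℤ) + 1 + (k : ℤ) - (r : ℤ)))
    refine (hset _ _ ?_).trans (hspec.trans (hset _ _ ?_).symm)
    rotate_left
    · intro c h1 h2 h3
      subst h3
      rw [bk_w_eq hs]
      unfold BKpsi BKwt
      rcases h1 with h | h
      · simp [h, hne]
      · simp only [h, Function.comp, Equiv.swap_apply_right, hlh]
        simp [add_assoc, add_comm, add_left_comm]
    · intro c h1 h2 h3
      subst h3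
      rw [bk_f_free h1 h2]
      change _ = BKpsi _ _ _ _ (BKg _ _ _)
      unfold BKpsi BKwt
      simp only
      split_ifs
      · rw [hlh]; congr 1; push_cast; ring
      · rfl
      · rfl
      · rfl

end BK

theorem bk_shape {n : ℕ} (lam : Fin n → ℕ) (h : IsPartition lam) :
    BKShape (fun c : cells lam => ((c : Fin n × ℕ).1 : ℕ)) (fun c => (c : Fin n × ℕ).2) := by
  have hm : ∀ p : Fin n × ℕ, p ∈ cells lam ↔ p.2 < lam p.1 := by
    intro p
    simp only [cells, mem_filter, mem_product, mem_univ, true_and, mem_range,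
      and_iff_right_iff_imp]
    intro hp
    exact hp.trans_le (Finset.le_sup (f := lam) (mem_univ p.1))
  constructor
  · intro c d h1 h2
    exact Subtype.ext (Prod.ext (Fin.ext h1) h2)
  · intro c r j hr hj
    have hc := (hm c.1).1 c.2
    have hrn : r < n := lt_of_le_of_lt hr (c : Fin n × ℕ).1.2
    refine ⟨⟨(⟨r, hrn⟩, j), (hm _).2 ?_⟩, rfl, rfl⟩
    have : lam (c : Fin n × ℕ).1 ≤ lam ⟨r, hrn⟩ := h (Fin.le_def.2 hr)
    exact lt_of_le_of_lt hj (lt_of_lt_of_le hc this)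

theorem bk_ok_iff {n : ℕ} (lam : Fin n → ℕ) (T : cells lam → Fin n × Bool) :
    IsBarred lam T ↔
      BKok (fun c : cells lam => ((c : Fin n × ℕ).1 : ℕ)) (fun c => (c : Fin n × ℕ).2) T := by
  constructor
  · intro h
    exact ⟨fun c d h1 h2 => h.1 c d (Fin.ext h1) h2, fun c d h1 h2 => h.2 c d h1 h2⟩
  · intro h
    exact ⟨fun c d h1 h2 => h.hrow c d (congrArg Fin.val h1) h2,
      fun c d h1 h2 => h.hcol c d h1 h2⟩

theorem bk_cT1 {n : ℕ} (r : ℕ) (i : Fin r) (lam : Fin n → ℕ) (T : cells lam → Fin n × Bool) :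
    cT1 r i lam T = ∏ c : cells lam, BKwt (fun _ => 1) (fun k => X (i, k))
      ((c : Fin n × ℕ).1 : ℕ) (c : Fin n × ℕ).2 (T c) := by
  unfold cT1
  rw [Finset.prod_filter]
  rfl

theorem bk_content1 {n : ℕ} (lam : Fin n → ℕ) (T : cells lam → Fin n × Bool) (k : Fin n) :
    Multiplicative.ofAdd (content1 lam T k) = ∏ c : cells lam,
      BKwt (fun a => if a = k then Multiplicative.ofAdd (1 : ℕ) else 1) (fun _ => 1)
      ((c : Fin n × ℕ).1 : ℕ) (c : Fin n × ℕ).2 (T c) := by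
  unfold content1
  rw [Finset.card_filter, ofAdd_sum]
  apply Finset.prod_congr rfl
  intro c _
  unfold BKwt
  rcases T c with ⟨a, b⟩
  cases b <;> by_cases h : a = k <;> simp [h]

/-- the Bender–Knuth-type involutions, Lemma 3.6: for each
`i ∈ {1,…,n-1}` (here 0-based: `i` and `i+1` with `i+1 < n`) there is an
involution `s_i` of the set `B_λ̄` of barred skew tableaux of shape `λ̄` which
preserves `c_T(y)` and permutes the unbarred content by the simple
transposition `σ_i`. -/
theorem bender_knuth_involution (n r : ℕ) (hn : 1 ≤ n) (hr : 1 ≤ r)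
    (lam : Fin r → Fin n → ℕ) (hlam : ∀ i, IsPartition (lam i))
    (i : ℕ) (hi : i + 1 < n) :
    ∃ f : {T : (j : Fin r) → cells (lam j) → Fin n × Bool // IsBarredSkew lam T} →
          {T : (j : Fin r) → cells (lam j) → Fin n × Bool // IsBarredSkew lam T},
      Function.Involutive f ∧
      ∀ T, cT lam (f T).1 = cT lam T.1 ∧
        contentT lam (f T).1
          = contentT lam T.1 ∘
              Equiv.swap (⟨i, Nat.lt_of_succ_lt hi⟩ : Fin n) ⟨i + 1, hi⟩ := by
  set lo : Fin n := ⟨i, Nat.lt_of_succ_lt hi⟩ with hlo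
  set hh : Fin n := ⟨i + 1, hi⟩ with hhh
  have hlh : hh.val = lo.val + 1 := rfl
  let F : ∀ j : Fin r, (cells (lam j) → Fin n × Bool) → cells (lam j) → Fin n × Bool :=
    fun j T => BKf (fun c : cells (lam j) => ((c : Fin n × ℕ).1 : ℕ))
      (fun c => (c : Fin n × ℕ).2) lo hh T
  refine ⟨fun T => ⟨fun j => F j (T.1 j), fun j => (bk_ok_iff _ _).2
    (bk_f_ok (bk_shape _ (hlam j)) ((bk_ok_iff _ _).1 (T.2 j)) hlh)⟩, ?_, ?_⟩
  · intro T
    apply Subtype.ext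
    funext j
    exact bk_f_inv (bk_shape _ (hlam j)) ((bk_ok_iff _ _).1 (T.2 j)) hlh
  · intro T
    constructor
    · unfold cT
      apply Finset.prod_congr rfl
      intro j _
      rw [bk_cT1, bk_cT1]
      exact bk_f_wt (bk_shape _ (hlam j)) ((bk_ok_iff _ _).1 (T.2 j)) hlh _ _
    · funext k
      simp only [Function.comp, contentT]
      apply Finset.sum_congr rfl
      intro j _
      apply Multiplicative.ofAdd.injective
      rw [bk_content1, bk_content1]
      refine (bk_f_wt (bk_shape _ (hlam j)) ((bk_ok_iff _ _).1 (T.2 j)) hlh _ _).trans ?_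
      apply Finset.prod_congr rfl
      intro c _
      unfold BKwt
      simp only [Function.comp, Equiv.swap_apply_eq_iff]
end

section
/- Let r ≥ 1 and let λ̄ = (λ^{(1)},…,λ^{(r)}) be a sequence of partitions in P_n. Then the monomial expansion s_λ̄(x|y) = Σ_{T ∈ B_λ̄} x^{ω(T)} · c_T(y) holds, where x^{ω(T)} = x_1^{ω(T)_1}⋯x_n^{ω(T)_n} and the sum is over all barred skew tableaux of shape λ̄. -/
open Finset MvPolynomial

attribute [local instance] Classical.propDecidable

theorem aux_weight {n r : ℕ} (i : Fin r) (lam : Fin n → ℕ) (T : cells lam → Fin n × Bool) :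
    (∏ k : Fin n, (X (Sum.inl k) : MvPolynomial (Fin n ⊕ Fin r × ℤ) ℤ) ^ content1 lam T k)
      * rename Sum.inr (cT1 r i lam T)
    = ∏ c : cells lam, (if (T c).2 = true then
        (X (Sum.inr (i, ysub (T c).1 (c : Fin n × ℕ))) : MvPolynomial (Fin n ⊕ Fin r × ℤ) ℤ)
        else X (Sum.inl (T c).1)) := by
  rw [Finset.prod_ite, mul_comm]
  congr 1
  · simp [cT1, map_prod]
  · rw [← Finset.prod_fiberwise (Finset.univ.filter fun c : cells lam => ¬ (T c).2 = true)
      (fun c => (T c).1)]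
    refine Finset.prod_congr rfl fun k _ => ?_
    have h : ∀ c ∈ ((Finset.univ.filter fun c : cells lam => ¬ (T c).2 = true).filter
        fun c => (T c).1 = k), (X (Sum.inl (T c).1) : MvPolynomial (Fin n ⊕ Fin r × ℤ) ℤ)
          = X (Sum.inl k) := by
      intro c hc
      rw [(Finset.mem_filter.1 hc).2]
    rw [Finset.prod_congr rfl h, Finset.prod_const, content1]
    congr 2
    ext c
    simp only [Finset.mem_filter, Finset.mem_univ, true_and, Prod.ext_iff]
    cases (T c).2 <;> simp

theorem aux_one {n r : ℕ} (i : Fin r) (lam : Fin n → ℕ) :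
    factSchur n r i lam = ∑ T ∈ Finset.univ.filter (IsBarred lam),
      (∏ k : Fin n, (X (Sum.inl k) : MvPolynomial (Fin n ⊕ Fin r × ℤ) ℤ) ^ content1 lam T k)
      * rename Sum.inr (cT1 r i lam T) := by
  simp_rw [aux_weight]
  have hx : ∀ (S : cells lam → Fin n),
      (∏ c : cells lam, ((X (Sum.inl (S c)) : MvPolynomial (Fin n ⊕ Fin r × ℤ) ℤ)
        + X (Sum.inr (i, ysub (S c) (c : Fin n × ℕ)))))
      = ∑ b : cells lam → Bool, ∏ c : cells lam, (if b c = true then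
        (X (Sum.inr (i, ysub (S c) (c : Fin n × ℕ))) : MvPolynomial (Fin n ⊕ Fin r × ℤ) ℤ)
        else X (Sum.inl (S c))) := by
    intro S
    have := Finset.prod_univ_sum (fun _ : cells lam => (Finset.univ : Finset Bool))
      (fun c b => if b = true then
        (X (Sum.inr (i, ysub (S c) (c : Fin n × ℕ))) : MvPolynomial (Fin n ⊕ Fin r × ℤ) ℤ)
        else X (Sum.inl (S c)))
    rw [Fintype.piFinset_univ] at this
    rw [← this]
    refine Finset.prod_congr rfl fun c _ => ?_
    simp [add_comm]
  unfold factSchur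
  simp_rw [hx]
  rw [← Finset.sum_product']
  refine Finset.sum_bij' (fun p _ c => (p.1 c, p.2 c))
    (fun T _ => (fun c => (T c).1, fun c => (T c).2)) ?_ ?_ ?_ ?_ ?_
  · intro p hp
    simp only [Finset.mem_product, Finset.mem_filter, Finset.mem_univ, true_and, and_true] at hp ⊢
    exact hp
  · intro p hp
    simp only [Finset.mem_product, Finset.mem_filter, Finset.mem_univ, true_and, and_true] at hp ⊢
    exact hp
  · intros; rfl
  · intros; rfl
  · intros; rfl

/-- the monomial expansion
`s_λ̄(x|y) = Σ_{T ∈ B_λ̄} x^{ω(T)} c_T(y)`. -/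
theorem factorial_schur_monomial_expansion (n r : ℕ) (hn : 1 ≤ n) (hr : 1 ≤ r)
    (lam : Fin r → Fin n → ℕ) (hlam : ∀ i, IsPartition (lam i)) :
    ∏ i, factSchur n r i (lam i)
      = ∑ T ∈ Finset.univ.filter
          (fun T : (i : Fin r) → cells (lam i) → Fin n × Bool => IsBarredSkew lam T),
        (∏ k : Fin n, (X (Sum.inl k) : MvPolynomial (Fin n ⊕ Fin r × ℤ) ℤ)
            ^ contentT lam T k)
          * rename Sum.inr (cT lam T) := by
  simp_rw [aux_one]
  rw [Finset.prod_univ_sum]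
  refine Finset.sum_congr ?_ fun T _ => ?_
  · ext T
    simp only [Fintype.mem_piFinset, Finset.mem_filter, Finset.mem_univ, true_and]
    rfl
  · rw [Finset.prod_mul_distrib, Finset.prod_comm, cT, map_prod]
    simp only [contentT, Finset.prod_pow_eq_pow_sum]
end

section
/- Fix i and an infinite family of variables y^{(i)}. As λ varies over P_n, the factorial Schur polynomials s_λ(x|y^{(i)}) form a ℤ[y]-basis of ℤ[x,y]^{S_n}, the ring of polynomials in the x and y variables which are symmetric in the x variables; in particular every element of ℤ[x,y]^{S_n} is uniquely a ℤ[y]-linear combination of the s_λ(x|y^{(i)}), λ ∈ P_n. -/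
open Finset MvPolynomial

attribute [local instance] Classical.propDecidable

lemma mem_cells' {n : ℕ} (lam : Fin n → ℕ) (c : Fin n × ℕ) :
    c ∈ cells lam ↔ c.2 < lam c.1 := by
  unfold cells
  simp only [mem_filter, mem_product, mem_univ, true_and, mem_range, and_iff_right_iff_imp]
  intro h
  exact lt_of_lt_of_le h (Finset.le_sup (f := lam) (mem_univ _))

lemma prod_cells {n : ℕ} {A : Type*} [CommRing A] (lam : Fin n → ℕ) (f : Fin n × ℕ → A) :
    ∏ c : cells lam, f c = ∏ r : Fin n, ∏ c ∈ range (lam r), f (r, c) := by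
  rw [Finset.prod_coe_sort (cells lam) f, Finset.prod_sigma']
  refine Finset.prod_bij' (fun c _ => ⟨c.1, c.2⟩) (fun c _ => (c.1, c.2)) ?_ ?_ ?_ ?_ ?_
  · intro c hc
    simpa [mem_cells'] using hc
  · intro c hc
    simpa [mem_cells'] using hc
  · intros; rfl
  · intros; rfl
  · intros; rfl

noncomputable def FS {n : ℕ} {A : Type*} [CommRing A] (x : Fin n → A) (y : ℤ → A)
    (lam : Fin n → ℕ) : A :=
  ∑ T ∈ Finset.univ.filter (IsSSYT lam),
    ∏ c : cells lam, (x (T c) + y (ysub (T c) (c : Fin n × ℕ)))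

/-- row sum -/
noncomputable def rowP {A : Type*} [CommRing A] (u v : A) (z : ℕ → A) (p q k : ℕ) : A :=
  (∏ c ∈ Ico p k, (u + z c)) * ∏ c ∈ Ico k q, (v + z (c + 1))

lemma rowH_tele {A : Type*} [CommRing A] (u v : A) (z : ℕ → A) (p m : ℕ) :
    (u - v) * ∑ k ∈ Icc p (p + m), rowP u v z p (p + m) k =
      ∏ c ∈ Ico p (p + m + 1), (u + z c) - ∏ c ∈ Ico p (p + m + 1), (v + z c) := by
  induction m with
  | zero => simp [rowP]
  | succ m ih =>
    have h1 : ∑ k ∈ Icc p (p + (m+1)), rowP u v z p (p + (m+1)) k =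
        (∑ k ∈ Icc p (p + m), rowP u v z p (p + m) k) * (v + z (p + m + 1))
          + ∏ c ∈ Ico p (p + m + 1), (u + z c) := by
      rw [← add_assoc, ← Finset.insert_Icc_right_eq_Icc_add_one (by omega), Finset.sum_insert (by simp), add_comm, Finset.sum_mul]
      congr 1
      · refine Finset.sum_congr rfl fun k hk => ?_
        rw [mem_Icc] at hk
        rw [rowP, rowP, Finset.prod_Ico_succ_top (by omega)]
        ring
      · simp [rowP]
    rw [h1, mul_add, ← mul_assoc, ih, ← add_assoc, Finset.prod_Ico_succ_top (b := p + m + 1) (by omega),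
      Finset.prod_Ico_succ_top (b := p + m + 1) (by omega)]
    ring

lemma rowH_symm {A : Type*} [CommRing A] [IsDomain A] (u v : A) (z : ℕ → A) (p q : ℕ)
    (hpq : p ≤ q) :
    ∑ k ∈ Icc p q, rowP u v z p q k = ∑ k ∈ Icc p q, rowP v u z p q k := by
  by_cases h : u = v
  · rw [h]
  obtain ⟨m, rfl⟩ := Nat.exists_eq_add_of_le hpq
  apply mul_left_cancel₀ (sub_ne_zero.2 h)
  rw [rowH_tele]
  have := rowH_tele v u z p m
  linear_combination this

lemma rowP_split {A : Type*} [CommRing A] (u v : A) (z : ℕ → A) {p q l h : ℕ} (hpl : p ≤ l)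
    (hq : h ≤ q) :
    ∑ k ∈ Icc l h, rowP u v z p q k =
      (∏ c ∈ Ico p l, (u + z c)) * (∑ k ∈ Icc l h, rowP u v z l h k) *
        ∏ c ∈ Ico h q, (v + z (c + 1)) := by
  rw [Finset.mul_sum, Finset.sum_mul]
  refine Finset.sum_congr rfl fun k hk => ?_
  rw [mem_Icc] at hk
  rw [rowP, rowP, ← Finset.prod_Ico_consecutive _ hpl hk.1, ← Finset.prod_Ico_consecutive _ hk.2 hq]
  ring

def loF (al be : ℕ → ℕ) (r : ℕ) : ℕ := max (al r) (be (r + 1))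
def hiF (al be : ℕ → ℕ) (r : ℕ) : ℕ := if r = 0 then be 0 else min (be r) (al (r - 1))

lemma rows_symm {A : Type*} [CommRing A] [IsDomain A] (u v : A) (y : ℤ → A) (s : ℤ)
    (al be : ℕ → ℕ) (n : ℕ) (hbe : be n = 0)
    (hlh : ∀ r < n, loF al be r ≤ hiF al be r) :
    ∏ r ∈ range n, ∑ k ∈ Icc (loF al be r) (hiF al be r),
        rowP u v (fun c => y (s + c - r)) (al r) (be r) k =
    ∏ r ∈ range n, ∑ k ∈ Icc (loF al be r) (hiF al be r),
        rowP v u (fun c => y (s + c - r)) (al r) (be r) k := by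
  have hl : ∀ r, al r ≤ loF al be r := fun r => le_max_left _ _
  have hh : ∀ r, hiF al be r ≤ be r := by
    intro r; unfold hiF; split_ifs with h
    · rw [h]
    · exact min_le_left _ _
  have key : ∀ u v : A, ∏ r ∈ range n, ∑ k ∈ Icc (loF al be r) (hiF al be r),
        rowP u v (fun c => y (s + c - r)) (al r) (be r) k =
      (∏ r ∈ range n, ∑ k ∈ Icc (loF al be r) (hiF al be r),
        rowP u v (fun c => y (s + c - r)) (loF al be r) (hiF al be r) k) *
      ∏ r ∈ range (n - 1), ((∏ c ∈ Ico (al r) (be (r+1)), (u + y (s + c - r))) *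
        ∏ c ∈ Ico (al r) (be (r+1)), (v + y (s + c - r))) := by
    intro u v
    have e1 : ∀ r, ∏ c ∈ Ico (al r) (loF al be r), (u + y (s + c - r)) =
        ∏ c ∈ Ico (al r) (be (r+1)), (u + y (s + c - r)) := by
      intro r
      congr 1
      ext c
      simp only [loF, mem_Ico]; omega
    have e2 : ∀ r : ℕ, ∏ c ∈ Ico (hiF al be (r+1)) (be (r+1)), (v + y (s + (c + 1 : ℕ) - (r+1 : ℕ))) =
        ∏ c ∈ Ico (al r) (be (r+1)), (v + y (s + c - r)) := by
      intro r
      have : Ico (hiF al be (r+1)) (be (r+1)) = Ico (al r) (be (r+1)) := by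
        ext c
        simp [hiF]; omega
      rw [this]
      refine Finset.prod_congr rfl fun c _ => ?_
      congr 2
      push_cast; ring
    rw [Finset.prod_congr rfl fun (r : ℕ) _ => rowP_split u v (fun c : ℕ => y (s + c - r)) (hl r) (hh r)]
    rw [Finset.prod_mul_distrib, Finset.prod_mul_distrib, mul_comm (∏ r ∈ range n, _), mul_assoc]
    congr 1
    rw [Finset.prod_mul_distrib]
    cases n with
    | zero => simp
    | succ m =>
      congr 1
      · rw [Finset.prod_congr rfl fun r _ => e1 r, Finset.prod_range_succ, hbe]
        simp
      · rw [Finset.prod_range_succ', Finset.prod_congr rfl fun r _ => e2 r]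
        simp [hiF]
  rw [key, key]
  congr 1
  · exact Finset.prod_congr rfl fun r hr => rowH_symm _ _ _ _ _ (hlh r (mem_range.1 hr))
  · exact Finset.prod_congr rfl fun r _ => mul_comm _ _

lemma exists_thresh {n : ℕ} (lam : Fin n → ℕ) (T : cells lam → Fin n) (hT : IsSSYT lam T) (j : ℕ) :
    ∃ k : ℕ → ℕ, (∀ r : Fin n, k r ≤ lam r) ∧ (∀ r, n ≤ r → k r = 0) ∧
      ∀ c : cells lam, (T c : ℕ) < j ↔ c.1.2 < k c.1.1 := by
  have h : ∀ r : ℕ, ∃ k : ℕ, (∀ h : r < n, k ≤ lam ⟨r, h⟩) ∧ (n ≤ r → k = 0) ∧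
      ∀ c : cells lam, (c.1.1 : ℕ) = r → ((T c : ℕ) < j ↔ c.1.2 < k) := by
    intro r
    by_cases hr : r < n
    swap
    · exact ⟨0, fun h => absurd h hr, fun _ => rfl, fun c hc => absurd (hc ▸ c.1.1.2) hr⟩
    have hex : ∃ k, lam ⟨r, hr⟩ ≤ k ∨ ∃ h : ((⟨r, hr⟩ : Fin n), k) ∈ cells lam, j ≤ (T ⟨_, h⟩ : ℕ) :=
      ⟨_, Or.inl le_rfl⟩
    refine ⟨Nat.find hex, fun _ => Nat.find_min' hex (Or.inl le_rfl), fun h => by omega, ?_⟩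
    rintro ⟨⟨r', c⟩, hc⟩ hr'
    obtain rfl : r' = ⟨r, hr⟩ := Fin.ext hr'
    have hc' := (mem_cells' _ _).1 hc
    simp only at hc' ⊢
    constructor
    · intro hlt
      by_contra hge
      push Not at hge
      rcases Nat.find_spec hex with h1 | ⟨h1, h2⟩
      · omega
      · have := hT.1 ⟨_, h1⟩ ⟨_, hc⟩ rfl hge
        have : (T ⟨_, h1⟩ : ℕ) ≤ T ⟨_, hc⟩ := this
        omega
    · intro hlt
      have := Nat.find_min hex hlt
      push Not at this
      exact this.2 hc
  choose k hk using h
  exact ⟨k, fun r => (hk r).1 r.2, fun r hr => (hk r).2.1 hr, fun c => (hk _).2.2 c rfl⟩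
/-- the filling with thresholds `k` on the strip between `al` and `be` -/
noncomputable def fillV {n : ℕ} (lam : Fin n → ℕ) (a b : Fin n) (T0 : cells lam → Fin n)
    (al be : ℕ → ℕ) (k : Fin n → ℕ) (c : Fin n × ℕ) : Fin n :=
  if al c.1 ≤ c.2 ∧ c.2 < be c.1 then (if c.2 < k c.1 then a else b)
  else if h : c ∈ cells lam then T0 ⟨c, h⟩ else a

lemma fiber_sum {n : ℕ} {A : Type*} [CommRing A] (lam : Fin n → ℕ)
    (hlam : IsPartition lam)
    (a b : Fin n) (hab : (b : ℕ) = a + 1) (T0 : cells lam → Fin n) (hT0 : IsSSYT lam T0) :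
    ∃ al be : ℕ → ℕ, ∃ O : A → A → (Fin n → A) → (ℤ → A) → A, 
     be n = 0 ∧ (∀ r < n, loF al be r ≤ hiF al be r) ∧
     (∀ (x x' : Fin n → A) y, (∀ j, j ≠ a → j ≠ b → x j = x' j) → O 0 0 x y = O 0 0 x' y) ∧
     ∀ (x : Fin n → A) (y : ℤ → A),
      ∑ T ∈ (Finset.univ.filter (IsSSYT lam)).filter
        (fun T => (fun c => if T c = b then a else T c) = (fun c => if T0 c = b then a else T0 c)),
        ∏ c : cells lam, (x (T c) + y (ysub (T c) (c : Fin n × ℕ))) =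
      O 0 0 x y * ∏ r ∈ range n, ∑ k ∈ Icc (loF al be r) (hiF al be r),
        rowP (x a) (x b) (fun c => y ((a + 1 : ℤ) + c - r)) (al r) (be r) k := by
  obtain ⟨al, hal1, hal2, hal3⟩ := exists_thresh lam T0 hT0 a
  obtain ⟨be, hbe1, hbe2, hbe3⟩ := exists_thresh lam T0 hT0 (a + 2)
  -- bounds for thresholds of any tableau in the fibre
  have hbound : ∀ T : cells lam → Fin n, IsSSYT lam T →
      ((fun c => if T c = b then a else T c) = (fun c => if T0 c = b then a else T0 c)) →
      ∃ k : ℕ → ℕ, (∀ r < n, loF al be r ≤ k r ∧ k r ≤ hiF al be r) ∧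
        ∀ c : cells lam, (T c : ℕ) < a + 1 ↔ c.1.2 < k c.1.1 := by
    intro T hT hTT
    have hv : ∀ c, ((T c : ℕ) = T0 c) ∨ (((T c : ℕ) = a ∨ (T c : ℕ) = a + 1) ∧
        ((T0 c : ℕ) = a ∨ (T0 c : ℕ) = a + 1)) := by
      intro c
      have := congrFun hTT c
      simp only [Fin.ext_iff] at this
      split_ifs at this <;> simp only [Fin.ext_iff] at * <;> omega
    obtain ⟨k, hk1, hk2, hk3⟩ := exists_thresh lam T hT (a + 1)
    have hA : ∀ c, (T c : ℕ) < a ↔ c.1.2 < al c.1.1 := by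
      intro c; rw [← hal3]; have := hv c; omega
    have hB : ∀ c, (T c : ℕ) < a + 2 ↔ c.1.2 < be c.1.1 := by
      intro c; rw [← hbe3]; have := hv c; omega
    refine ⟨k, fun r hr => ?_, hk3⟩
    have hle : ∀ (f g : ℕ → ℕ) (_ : ∀ r : Fin n, f r ≤ lam r)
        (_ : ∀ c : cells lam, c.1.2 < f c.1.1 → c.1.2 < g c.1.1), f r ≤ g r := by
      intro f g h1 h2
      by_contra hlt
      push Not at hlt
      have := h2 ⟨(⟨r, hr⟩, g r), (mem_cells' _ _).2 (lt_of_lt_of_le hlt (h1 ⟨r, hr⟩))⟩ hlt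
      simp at this
    have h1 : al r ≤ k r := hle _ _ hal1 (fun c => by rw [← hA, ← hk3]; omega)
    have h2 : k r ≤ be r := hle _ _ hk1 (fun c => by rw [← hB, ← hk3]; omega)
    have hsucc : ∀ (f g : ℕ → ℕ) (_ : ∀ r : Fin n, f r ≤ lam r) (j : ℕ)
        (_ : ∀ c, (T c : ℕ) < j + 1 ↔ c.1.2 < f c.1.1)
        (_ : ∀ c, (T c : ℕ) < j ↔ c.1.2 < g c.1.1) (r : ℕ), r + 1 < n → f (r + 1) ≤ g r := by
      intro f g h1 j h2 h3 r hr
      by_contra hlt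
      push Not at hlt
      have hc1 : ((⟨r + 1, hr⟩ : Fin n), g r) ∈ cells lam :=
        (mem_cells' _ _).2 (lt_of_lt_of_le hlt (h1 ⟨r + 1, hr⟩))
      have hc2 : ((⟨r, by omega⟩ : Fin n), g r) ∈ cells lam := by
        have hq := (mem_cells' _ _).1 hc1
        refine (mem_cells' _ _).2 (lt_of_lt_of_le hq (hlam ?_))
        simp [Fin.le_def]
      have e1 := (h2 ⟨_, hc1⟩).2 hlt
      have e2 : (T ⟨_, hc2⟩ : ℕ) < T ⟨_, hc1⟩ := hT.2 ⟨_, hc2⟩ ⟨_, hc1⟩ rfl (by simp [Fin.lt_def])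
      have e3 := (h3 ⟨_, hc2⟩).1 (by omega)
      simp at e3
    constructor
    · refine max_le h1 ?_
      by_cases hr' : r + 1 < n
      · exact hsucc be k hbe1 (a + 1) hB hk3 r hr'
      · rw [hbe2 _ (by omega)]; omega
    · unfold hiF
      split_ifs with h0
      · rw [← h0]; exact h2
      · refine le_min h2 ?_
        have := hsucc k al hk1 a hk3 hA (r - 1) (by omega)
        rwa [Nat.sub_add_cancel (by omega)] at this
  have hlh : ∀ r < n, loF al be r ≤ hiF al be r := by
    obtain ⟨k, hk, -⟩ := hbound T0 hT0 rfl
    exact fun r hr => (hk r hr).1.trans (hk r hr).2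
  refine ⟨al, be, fun _ _ x y => ∏ r : Fin n, ∏ c ∈ (range (lam r)).filter
      (fun c => ¬ (al r ≤ c ∧ c < be r)), (x (fillV lam a b T0 al be (fun _ => 0) (r, c)) +
        y (ysub (fillV lam a b T0 al be (fun _ => 0) (r, c)) (r, c))), hbe2 n le_rfl, hlh, ?_, ?_⟩
  · intro x x' y hx
    refine Finset.prod_congr rfl fun r _ => Finset.prod_congr rfl fun c hc => ?_
    simp only [mem_filter, mem_range] at hc
    have hc' : (r, c) ∈ cells lam := (mem_cells' _ _).2 hc.1
    have e : fillV lam a b T0 al be (fun _ => 0) (r, c) = T0 ⟨_, hc'⟩ := by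
      unfold fillV
      rw [if_neg hc.2, dif_pos hc']
    have h1 := hal3 ⟨_, hc'⟩
    have h2 := hbe3 ⟨_, hc'⟩
    rw [e]
    rw [hx]
    · intro h; rw [h] at h1 h2; apply hc.2; simp at h1 h2; exact ⟨h1, h2⟩
    · intro h; rw [h, hab] at h1 h2; apply hc.2; simp at h1 h2; exact ⟨h1, h2⟩
  intro x y
  have hin : ∀ c : cells lam, (al c.1.1 ≤ c.1.2 ∧ c.1.2 < be c.1.1) ↔
      ((T0 c : ℕ) = a ∨ (T0 c : ℕ) = a + 1) := by
    intro c
    have h1 := hal3 c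
    have h2 := hbe3 c
    omega
  have hfv : ∀ (k : Fin n → ℕ) (c : cells lam), fillV lam a b T0 al be k c.1 =
      if ((T0 c : ℕ) = a ∨ (T0 c : ℕ) = a + 1) then (if c.1.2 < k c.1.1 then a else b)
      else T0 c := by
    intro k c
    unfold fillV
    simp only [hin c, c.2, dif_pos]
  have hlo : ∀ r, al r ≤ loF al be r := fun r => le_max_left _ _
  have hhi : ∀ r, hiF al be r ≤ be r := by
    intro r; unfold hiF; split_ifs with h
    · rw [h]
    · exact min_le_left _ _
  have step1 : ∑ T ∈ (Finset.univ.filter (IsSSYT lam)).filter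
        (fun T => (fun c => if T c = b then a else T c) = (fun c => if T0 c = b then a else T0 c)),
        ∏ c : cells lam, (x (T c) + y (ysub (T c) (c : Fin n × ℕ))) =
      ∑ k ∈ Fintype.piFinset (fun r : Fin n => Icc (loF al be r) (hiF al be r)),
        ∏ c : cells lam, (x (fillV lam a b T0 al be k c) +
          y (ysub (fillV lam a b T0 al be k c) (c : Fin n × ℕ))) := by
    symm
    refine Finset.sum_nbij (fun k => fun c : cells lam => fillV lam a b T0 al be k c) ?_ ?_ ?_ ?_
    · intro k hk
      simp only [Fintype.mem_piFinset, mem_Icc] at hk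
      simp only [mem_filter, mem_univ, true_and]
      refine ⟨⟨?_, ?_⟩, ?_⟩
      · intro c d h1 h2
        have h3 : (T0 c : ℕ) ≤ T0 d := hT0.1 c d h1 h2
        simp only [hfv]
        rw [← h1, Fin.le_def]
        split_ifs <;> omega
      · intro c d h1 h2
        have h3 : (T0 c : ℕ) < T0 d := hT0.2 c d h1 h2
        simp only [hfv]
        rw [Fin.lt_def]
        by_cases hboth : (T0 c : ℕ) = a ∧ (T0 d : ℕ) = a + 1
        · have hadj : (d.1.1 : ℕ) = c.1.1 + 1 := by
            by_contra hne
            have hlt : (c.1.1 : ℕ) + 1 < d.1.1 := by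
              have : (c.1.1 : ℕ) < d.1.1 := h2
              omega
            have hm : ((⟨c.1.1 + 1, hlt.trans d.1.1.2⟩ : Fin n), d.1.2) ∈ cells lam := by
              have hq := (mem_cells' _ _).1 d.2
              refine (mem_cells' _ _).2 (lt_of_lt_of_le hq (hlam ?_))
              exact hlt.le
            have e1 : (T0 c : ℕ) < T0 ⟨_, hm⟩ := hT0.2 c ⟨_, hm⟩ h1 (by simp [Fin.lt_def])
            have e2 : (T0 ⟨_, hm⟩ : ℕ) < T0 d := hT0.2 ⟨_, hm⟩ d rfl hlt
            omega
          have hkc := (hk c.1.1).1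
          have hkd := (hk d.1.1).2
          have hb := (hbe3 d).1 (by omega)
          have ha := (not_congr (hal3 c)).1 (by omega)
          have e1 : be d.1.1 ≤ loF al be c.1.1 := by
            rw [hadj]; exact le_max_right _ _
          have e2 : hiF al be d.1.1 ≤ al c.1.1 := by
            rw [hadj]; unfold hiF; simp
          rw [if_pos (Or.inl hboth.1), if_pos (Or.inr hboth.2), if_pos (by omega), if_neg (by omega)]
          omega
        · split_ifs <;> omega
      · funext c
        rw [hfv]
        grind
    · intro k hk k' hk' hkk
      simp only [mem_coe, Fintype.mem_piFinset, mem_Icc] at hk hk'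
      have aux : ∀ k k' : Fin n → ℕ, (∀ r : Fin n, loF al be r ≤ k r ∧ k r ≤ hiF al be r) →
        (∀ r : Fin n, loF al be r ≤ k' r ∧ k' r ≤ hiF al be r) →
        ((fun c : cells lam => fillV lam a b T0 al be k c) =
         (fun c : cells lam => fillV lam a b T0 al be k' c)) → ∀ r, ¬ k r < k' r := by
        intro k k' hk hk' hkk r hlt
        have g1 := hk r
        have g2 := hk' r
        have g3 := hlo r
        have g4 := hhi r
        have g5 := hbe1 r
        have hc : (r, k r) ∈ cells lam := (mem_cells' _ _).2 (by simp only; omega)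
        have := congrFun hkk ⟨_, hc⟩
        simp only [fillV] at this
        rw [if_pos (by omega), if_neg (by omega), if_pos (by omega), if_pos (by omega), Fin.ext_iff] at this
        omega
      funext r
      have h1 := aux k k' hk hk' hkk r
      have h2 := aux k' k hk' hk hkk.symm r
      omega
    · intro T hT
      simp only [coe_filter, mem_filter, mem_univ, true_and, Set.mem_ofPred_eq] at hT
      obtain ⟨k, hk1, hk2⟩ := hbound T hT.1 hT.2
      refine ⟨fun r => k r, ?_, ?_⟩
      · simp only [mem_coe, Fintype.mem_piFinset, mem_Icc]
        exact fun r => hk1 r r.2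
      · funext c
        simp only [hfv, ← hk2]
        have := congrFun hT.2 c
        simp only [Fin.ext_iff] at this ⊢
        split_ifs at this ⊢ <;> simp only [Fin.ext_iff] at * <;> omega
    · intros; rfl
  rw [step1]
  have step2 : ∀ k ∈ Fintype.piFinset (fun r : Fin n => Icc (loF al be r) (hiF al be r)),
      ∏ c : cells lam, (x (fillV lam a b T0 al be k c) +
          y (ysub (fillV lam a b T0 al be k c) (c : Fin n × ℕ))) =
      (∏ r : Fin n, ∏ c ∈ (range (lam r)).filter
      (fun c => ¬ (al r ≤ c ∧ c < be r)), (x (fillV lam a b T0 al be (fun _ => 0) (r, c)) +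
        y (ysub (fillV lam a b T0 al be (fun _ => 0) (r, c)) (r, c)))) *
      ∏ r : Fin n, rowP (x a) (x b) (fun c => y ((a + 1 : ℤ) + c - (r : ℕ))) (al r) (be r) (k r) := by
    intro k hk
    simp only [Fintype.mem_piFinset, mem_Icc] at hk
    rw [prod_cells lam (fun c => x (fillV lam a b T0 al be k c) +
          y (ysub (fillV lam a b T0 al be k c) c)), ← Finset.prod_mul_distrib]
    refine Finset.prod_congr rfl fun r _ => ?_
    have g1 := hk r
    have g3 := hlo r
    have g4 := hhi r
    have g5 := hbe1 r
    rw [← Finset.prod_filter_mul_prod_filter_not (range (lam r)) (fun c => al r ≤ c ∧ c < be r),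
      mul_comm]
    congr 1
    · refine Finset.prod_congr rfl fun c hc => ?_
      simp only [mem_filter] at hc
      have : fillV lam a b T0 al be k (r, c) = fillV lam a b T0 al be (fun _ => 0) (r, c) := by
        unfold fillV
        rw [if_neg hc.2, if_neg hc.2]
      rw [this]
    · have : (range (lam r)).filter (fun c => al r ≤ c ∧ c < be r) = Ico (al r) (be r) := by
        ext c; simp only [mem_filter, mem_range, mem_Ico]; omega
      rw [this, ← Finset.prod_Ico_consecutive _ (g3.trans g1.1) (g1.2.trans g4), rowP]
      congr 1
      · refine Finset.prod_congr rfl fun c hc => ?_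
        rw [mem_Ico] at hc
        have : fillV lam a b T0 al be k (r, c) = a := by
          unfold fillV
          rw [if_pos (by simp only; omega), if_pos (by simp only; omega)]
        rw [this]
        rfl
      · refine Finset.prod_congr rfl fun c hc => ?_
        rw [mem_Ico] at hc
        have : fillV lam a b T0 al be k (r, c) = b := by
          unfold fillV
          rw [if_pos (by simp only; omega), if_neg (by simp only; omega)]
        rw [this]
        congr 2
        simp only [ysub, hab]
        push_cast; ring
  rw [Finset.sum_congr rfl step2, ← Finset.mul_sum]
  congr 1
  rw [← Fin.prod_univ_eq_prod_range (fun r => ∑ k ∈ Icc (loF al be r) (hiF al be r),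
        rowP (x a) (x b) (fun c => y ((a + 1 : ℤ) + c - r)) (al r) (be r) k) n,
    Finset.prod_univ_sum]

lemma FS_swap {n : ℕ} {A : Type*} [CommRing A] [IsDomain A] (lam : Fin n → ℕ)
    (hlam : IsPartition lam) (a b : Fin n) (hab : (b : ℕ) = a + 1) (x : Fin n → A) (y : ℤ → A) :
    FS (x ∘ Equiv.swap a b) y lam = FS x y lam := by
  unfold FS
  rw [← Finset.sum_fiberwise _ (fun T => (fun c => if T c = b then a else T c)),
    ← Finset.sum_fiberwise (Finset.univ.filter (IsSSYT lam)) (fun T => (fun c => if T c = b then a else T c))]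
  refine Finset.sum_congr rfl fun U _ => ?_
  rcases Finset.eq_empty_or_nonempty ((Finset.univ.filter (IsSSYT lam)).filter
    (fun T => (fun c => if T c = b then a else T c) = U)) with he | ⟨T0, hT0⟩
  · rw [he]; simp
  · simp only [mem_filter, mem_univ, true_and] at hT0
    obtain ⟨hT0, rfl⟩ := hT0
    obtain ⟨al, be, O, h1, h2, h3, h4⟩ := fiber_sum (A := A) lam hlam a b hab T0 hT0
    rw [h4, h4, h3 (x ∘ Equiv.swap a b) x y, ← rows_symm _ _ _ _ _ _ _ h1 h2]
    · simp
    · intro j hj hj'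
      simp [Equiv.swap_apply_of_ne_of_ne hj hj']

lemma FS_perm {n : ℕ} {A : Type*} [CommRing A] [IsDomain A] (lam : Fin n → ℕ)
    (hlam : IsPartition lam) (y : ℤ → A) (s : Equiv.Perm (Fin n)) (x : Fin n → A) :
    FS (x ∘ s) y lam = FS x y lam := by
  cases n with
  | zero => 
    congr 1
    funext j
    exact j.elim0
  | succ m =>
    have hs : s ∈ Submonoid.closure (Set.range fun i : Fin m ↦ Equiv.swap i.castSucc i.succ) := by
      rw [Equiv.Perm.mclosure_swap_castSucc_succ]; trivial
    induction hs using Submonoid.closure_induction generalizing x with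
    | mem s h =>
      obtain ⟨j, rfl⟩ := h
      exact FS_swap lam hlam _ _ (by simp) x y
    | one => rfl
    | mul s t _ _ h1 h2 =>
      rw [Equiv.Perm.coe_mul, ← Function.comp_assoc, h2, h1]
lemma row_le {n : ℕ} (lam : Fin n → ℕ) (hlam : IsPartition lam) (T : cells lam → Fin n)
    (hT : IsSSYT lam T) : ∀ c : cells lam, c.1.1 ≤ T c := by
  have : ∀ r : ℕ, ∀ c : cells lam, (c.1.1 : ℕ) = r → r ≤ T c := by
    intro r
    induction r with
    | zero => intros; omega
    | succ r ih =>
      intro c hc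
      have hq := (mem_cells' _ _).1 c.2
      have hm : ((⟨r, by have := c.1.1.2; omega⟩ : Fin n), c.1.2) ∈ cells lam := by
        refine (mem_cells' _ _).2 (lt_of_lt_of_le hq (hlam ?_))
        simp [Fin.le_def]; omega
      have h1 := ih ⟨_, hm⟩ rfl
      have h2 : (T ⟨_, hm⟩ : ℕ) < T c := hT.2 ⟨_, hm⟩ c rfl (by simp [Fin.lt_def]; omega)
      omega
  exact fun c => this _ c rfl

/-- exponent of a partition -/
noncomputable def pexp {n : ℕ} (lam : Fin n → ℕ) : Fin n →₀ ℕ := Finsupp.equivFunOnFinite.symm lam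

lemma content_apply {n : ℕ} (lam : Fin n → ℕ) (T : cells lam → Fin n) (j : Fin n) :
    (∑ c : cells lam, Finsupp.single (T c) 1 : Fin n →₀ ℕ) j =
      (Finset.univ.filter fun c : cells lam => T c = j).card := by
  rw [Finsupp.finsetSum_apply, Finset.card_filter]
  refine Finset.sum_congr rfl fun c _ => ?_
  rw [Finsupp.single_apply]

lemma row_card {n : ℕ} (lam : Fin n → ℕ) (j : Fin n) :
    (Finset.univ.filter fun c : cells lam => c.1.1 = j).card = lam j := by
  rw [← Finset.card_range (lam j)]
  refine Finset.card_bij (fun c _ => c.1.2) ?_ ?_ ?_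
  · intro c hc
    simp only [mem_filter, mem_univ, true_and] at hc
    have := (mem_cells' _ _).1 c.2
    rw [hc] at this
    simpa using this
  · intro c hc d hd h
    simp only [mem_filter, mem_univ, true_and] at hc hd
    exact Subtype.ext (Prod.ext (hc.trans hd.symm) h)
  · intro k hk
    exact ⟨⟨(j, k), (mem_cells' _ _).2 (mem_range.1 hk)⟩, by simp, rfl⟩

lemma content_row {n : ℕ} (lam : Fin n → ℕ) :
    (∑ c : cells lam, Finsupp.single c.1.1 1 : Fin n →₀ ℕ) = pexp lam := by
  ext j
  rw [content_apply lam (fun c => c.1.1), row_card]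
  rfl

lemma content_lt {n : ℕ} (lam : Fin n → ℕ) (hlam : IsPartition lam) (T : cells lam → Fin n)
    (hT : IsSSYT lam T) (hne : T ≠ fun c => c.1.1) :
    toLex (∑ c : cells lam, Finsupp.single (T c) 1 : Fin n →₀ ℕ) < toLex (pexp lam) := by
  have hge := row_le lam hlam T hT
  have hex : ∃ j : Fin n, ∃ c : cells lam, c.1.1 = j ∧ T c ≠ j := by
    by_contra h
    push Not at h
    exact hne (funext fun c => h _ c rfl)
  obtain ⟨j, ⟨c0, hc0, hc0'⟩, hmin⟩ := WellFounded.has_min (wellFounded_lt (α := Fin n))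
    {j | ∃ c : cells lam, c.1.1 = j ∧ T c ≠ j} hex
  have hmin' : ∀ c : cells lam, c.1.1 < j → T c = c.1.1 := by
    intro c hc
    by_contra h
    exact hmin _ ⟨c, rfl, h⟩ hc
  have hsub : ∀ i ≤ j, ∀ c, T c = i → c.1.1 = i := by
    intro i hi c hc
    have h1 := hge c
    rcases lt_or_eq_of_le h1 with h | h
    · have := hmin' c (by rw [hc] at h; exact lt_of_lt_of_le h hi)
      rw [← hc, this]
    · rw [h, hc]
  refine ⟨j, fun i hi => ?_, ?_⟩
  · change (∑ c : cells lam, Finsupp.single (T c) 1 : Fin n →₀ ℕ) i = lam i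
    rw [content_apply, ← row_card lam i]
    congr 1
    ext c
    simp only [mem_filter, mem_univ, true_and]
    exact ⟨hsub i hi.le c, fun h => by rw [← h]; exact hmin' c (h ▸ hi)⟩
  · change (∑ c : cells lam, Finsupp.single (T c) 1 : Fin n →₀ ℕ) j < lam j
    rw [content_apply, ← row_card lam j]
    apply Finset.card_lt_card
    rw [Finset.ssubset_iff_of_subset]
    · exact ⟨c0, by simpa using hc0, by simpa using hc0'⟩
    · intro c
      simp only [mem_filter, mem_univ, true_and]
      exact hsub j le_rfl c

section lead
variable {n : ℕ} {R : Type*} [CommRing R] [IsDomain R]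

/-- factorial Schur polynomial over `R` -/
noncomputable def fS (y : ℤ → R) (lam : Fin n → ℕ) : MvPolynomial (Fin n) R :=
  FS X (fun k => C (y k)) lam

lemma tab_coeff (y : ℤ → R) (lam : Fin n → ℕ) (T : cells lam → Fin n) :
    coeff (∑ c : cells lam, Finsupp.single (T c) 1)
      (∏ c : cells lam, (X (T c) + C (y (ysub (T c) c.1))) : MvPolynomial (Fin n) R) = 1 := by
  have := MonomialOrder.coeff_prod_sum_degree (m := MonomialOrder.lex)
    (fun c : cells lam => (X (T c) + C (y (ysub (T c) c.1)) : MvPolynomial (Fin n) R)) Finset.univ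
  simp only [MonomialOrder.degree_X_add_C] at this
  rw [this]
  exact Finset.prod_eq_one fun c _ => MonomialOrder.monic_X_add_C _ _ _

lemma tab_coeff_gt (y : ℤ → R) (lam : Fin n → ℕ) (T : cells lam → Fin n) (m : Fin n →₀ ℕ)
    (hm : toLex (∑ c : cells lam, Finsupp.single (T c) 1 : Fin n →₀ ℕ) < toLex m) :
    coeff m
      (∏ c : cells lam, (X (T c) + C (y (ysub (T c) c.1))) : MvPolynomial (Fin n) R) = 0 := by
  apply MonomialOrder.coeff_eq_zero_of_lt (m := MonomialOrder.lex)
  refine lt_of_le_of_lt MonomialOrder.degree_prod_le ?_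
  simp only [MonomialOrder.degree_X_add_C]
  exact hm

lemma fS_coeff_gt (y : ℤ → R) (lam : Fin n → ℕ) (hlam : IsPartition lam) (m : Fin n →₀ ℕ)
    (hm : toLex (pexp lam) < toLex m) : coeff m (fS y lam) = 0 := by
  unfold fS FS
  rw [coeff_sum]
  refine Finset.sum_eq_zero fun T hT => ?_
  simp only [mem_filter, mem_univ, true_and] at hT
  apply tab_coeff_gt
  by_cases h : T = fun c => c.1.1
  · subst h
    rw [content_row]; exact hm
  · exact (content_lt lam hlam T hT h).trans hm

lemma fS_coeff_self (y : ℤ → R) (lam : Fin n → ℕ) (hlam : IsPartition lam) :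
    coeff (pexp lam) (fS y lam) = 1 := by
  unfold fS FS
  rw [coeff_sum, Finset.sum_eq_single (fun c : cells lam => c.1.1)]
  · rw [← content_row]
    exact tab_coeff y lam (fun c => c.1.1)
  · intro T hT hne
    simp only [mem_filter, mem_univ, true_and] at hT
    exact tab_coeff_gt y lam T _ (content_lt lam hlam T hT hne)
  · intro h
    exfalso
    apply h
    simp only [mem_filter, mem_univ, true_and]
    exact ⟨fun c d h _ => le_of_eq h, fun c d _ h => h⟩

lemma fS_symm (y : ℤ → R) (lam : Fin n → ℕ) (hlam : IsPartition lam) :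
    (fS y lam).IsSymmetric := by
  intro e
  have h1 : rename e (fS y lam) = FS (X ∘ e) (fun k => C (y k)) lam := by
    unfold fS FS
    simp [map_sum, map_prod]
  rw [h1, FS_perm lam hlam]
  rfl

lemma basis_exists (y : ℤ → R) (p : MvPolynomial (Fin n) R) (hp : p.IsSymmetric) :
    ∃ c : {l : Fin n → ℕ // IsPartition l} →₀ R, p = c.sum fun lam q => C q * fS y lam.1 := by
  induction hd : (MonomialOrder.lex (σ := Fin n)).toSyn (MonomialOrder.lex.degree p)
    using WellFoundedLT.induction generalizing p with
  | ind d ih =>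
  by_cases h0 : p = 0
  · exact ⟨0, by simp [h0]⟩
  set m := MonomialOrder.lex.degree p with hm
  have hanti : IsPartition (m : Fin n → ℕ) := hp.antitone_supDegree
  have hpm : pexp (m : Fin n → ℕ) = m := by ext; rfl
  set q := coeff m p with hq
  set p' := p - C q * fS y m with hp'
  have hS : p'.IsSymmetric := by
    intro e
    rw [hp', map_sub, map_mul, rename_C, hp e, fS_symm y m hanti e]
  have key : ∃ c : {l : Fin n → ℕ // IsPartition l} →₀ R,
      p' = c.sum fun lam q => C q * fS y lam.1 := by
    by_cases h1 : p' = 0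
    · exact ⟨0, by simp [h1]⟩
    refine ih _ ?_ p' hS rfl
    rw [← hd]
    by_contra hge
    have hne := (MonomialOrder.lex.coeff_degree_ne_zero_iff).2 h1
    apply hne
    rw [not_lt] at hge
    rcases eq_or_lt_of_le hge with h | h
    · rw [← MonomialOrder.lex.toSyn.injective h, hp', coeff_sub, coeff_C_mul]
      have := fS_coeff_self y m hanti
      rw [hpm] at this
      rw [this, mul_one, sub_self]
    · have e1 := MonomialOrder.coeff_eq_zero_of_lt h
      have e2 := fS_coeff_gt y m hanti (MonomialOrder.lex.degree p') (by rw [hpm]; exact h)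
      nth_rewrite 2 [hp']
      rw [coeff_sub, coeff_C_mul, e1, e2]; simp
  obtain ⟨c, hc⟩ := key
  refine ⟨c + Finsupp.single ⟨m, hanti⟩ q, ?_⟩
  rw [Finsupp.sum_add_index' (by simp) (by intros; simp [add_mul]), ← hc,
    Finsupp.sum_single_index (by simp), hp']
  ring

lemma basis_unique (y : ℤ → R) (c : {l : Fin n → ℕ // IsPartition l} →₀ R)
    (hc : (c.sum fun lam q => C q * fS y lam.1) = 0) : c = 0 := by
  by_contra hne
  obtain ⟨l, hl, hmax⟩ := Finset.exists_max_image c.support (fun l => toLex (pexp l.1))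
    (Finsupp.support_nonempty_iff.2 hne)
  have h := congrArg (coeff (pexp l.1)) hc
  rw [Finsupp.sum, coeff_sum, Finset.sum_eq_single l] at h
  · rw [coeff_C_mul, fS_coeff_self y _ l.2] at h
    simp at h
    exact (Finsupp.mem_support_iff.1 hl) h
  · intro l' hl' hne
    rw [coeff_C_mul, fS_coeff_gt y _ l'.2, mul_zero]
    refine lt_of_le_of_ne (hmax l' hl') fun h => hne ?_
    apply Subtype.ext
    exact Finsupp.equivFunOnFinite.symm.injective (toLex.injective h)
  · intro h; exact absurd hl h

end lead

/-- for a fixed family `y^{(i)}`, the factorial Schur polynomials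
`s_λ(x|y^{(i)})`, `λ ∈ P_n`, form a `ℤ[y]`-basis of the ring of polynomials in the
`x` and `y` variables which are symmetric in the `x` variables: every symmetric-in-`x`
polynomial is uniquely a finitely supported `ℤ[y]`-linear combination of them. -/
theorem factorial_schur_basis (n r : ℕ) (hn : 1 ≤ n) (hr : 1 ≤ r) (i : Fin r)
    (p : MvPolynomial (Fin n ⊕ Fin r × ℤ) ℤ)
    (hp : ∀ σ : Equiv.Perm (Fin n), rename (Sum.map σ id) p = p) :
    ∃! c : {l : Fin n → ℕ // IsPartition l} →₀ MvPolynomial (Fin r × ℤ) ℤ,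
      p = c.sum fun lam q => rename Sum.inr q * factSchur n r i lam.1 := by
  let φ := sumAlgEquiv ℤ (Fin n) (Fin r × ℤ)
  let y : ℤ → MvPolynomial (Fin r × ℤ) ℤ := fun k => X (i, k)
  have hφr : ∀ q, φ (rename Sum.inr q) = C q := by
    intro q
    have := DFunLike.congr_fun (sumAlgEquiv_comp_rename_inr ℤ (Fin n) (Fin r × ℤ)) q
    exact this
  have hφs : ∀ lam, φ (factSchur n r i lam) = fS y lam := by
    intro lam
    simp only [factSchur, fS, FS, map_sum, map_prod, map_add, φ, y, sumAlgEquiv_X_inl,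
      sumAlgEquiv_X_inr]
  have hφp : (φ p).IsSymmetric := by
    intro e
    have h1 : ((rename e).restrictScalars ℤ).comp φ.toAlgHom =
        φ.toAlgHom.comp (rename (Sum.map e id)) := by
      apply MvPolynomial.algHom_ext
      rintro (j | j) <;> simp [φ]
    have h2 := DFunLike.congr_fun h1 p
    have h3 : rename e (φ p) = φ (rename (Sum.map e id) p) := h2
    rw [h3, hp]
  have hsum : ∀ c : {l : Fin n → ℕ // IsPartition l} →₀ MvPolynomial (Fin r × ℤ) ℤ,
      φ (c.sum fun lam q => rename Sum.inr q * factSchur n r i lam.1) =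
        c.sum fun lam q => C q * fS y lam.1 := by
    intro c
    simp only [Finsupp.sum, map_sum, map_mul, hφr, hφs]
  obtain ⟨c, hc⟩ := basis_exists y (φ p) hφp
  refine ⟨c, φ.injective (by rw [hsum]; exact hc), ?_⟩
  intro c' hc'
  have h' := congrArg φ hc'
  rw [hsum, hc] at h'
  rw [← sub_eq_zero]
  apply basis_unique y
  rw [Finsupp.sum_sub_index (by intros; simp [sub_mul]), h', sub_self]
end
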